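/- arXiv:math/0503549 — 3 statements merged into one kernel-verified Lean document; each statement's English description precedes it below -/
import Mathlib

section
/- Let α ∈ ℝ^k with λ = ‖α‖ ≠ 0 (Euclidean norm), let W be a real random variable with E W = 0 and Var W = 1, let W* have the W-zero biased distribution, and let Y = Σ_{i=1}^k (α_i/λ) W_i where W_1,…,W_k are independent copies of W. Let Y* have the Y-zero biased distribution. Then d(Y, Y*) ≤ φ · d(W, W*), where φ = Σ_{i=1}^k |α_i|³/λ³ and d is the Wasserstein distance; moreover φ < 1 if and only if α is not a scalar multiple of a standard basis vector. -/
/-!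
Write `aᵢ = αᵢ / lam`, so `∑ aᵢ² = 1`, and let `Uᵢ` be the sum `Y` with its `i`-th summand `aᵢ Wᵢ`
replaced by `aᵢ W*`, where `W*` is independent of the remaining variables. The key fact is that
the law `νY` of `Y*` is the mixture of the laws of the `Uᵢ` with weights `aᵢ²`
(`zeroBiased_eq_mixture`). To see this, test against a bounded continuous `h` with primitive `f`:
`E h(Y*) = E[Y f(Y)] = ∑ aᵢ E[Wᵢ f(Y)]`, and conditionally on the other variables the zero bias
property of `W` applied to `w ↦ f (aᵢ w + v)` turns `E[Wᵢ f(Y)]` into `aᵢ E h(Uᵢ)`. Bounded `h` need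
only second moments, so the identity of measures holds without any third moment assumption.

For `h` 1-Lipschitz this gives `E h(Y) - E h(Y*) = ∑ aᵢ² (E h(Y) - E h(Uᵢ))`, and in the `i`-th
term the function `w ↦ h (aᵢ w + v)` is `|aᵢ|`-Lipschitz, so the term is at most
`|aᵢ|³ d(W, W*)`.

Since `wassersteinDist` is a real supremum of Bochner integrals, infinite first moments need
separate care. If `Y*` is not integrable, the defining supremum is unbounded, hence equal to `0`,
and the inequality is trivial (`wassersteinDist_eq_zero_of_not_integrable`). If `Y*` is integrable,
the mixture identity makes `W*` integrable as well.

The last claim is the equality case of `∑ |aᵢ|³ ≤ ∑ aᵢ² = 1`.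
-/

open MeasureTheory

/-- The Wasserstein distance between two distributions on `ℝ`:
`d(μ, ν) = sup_h |∫ h dμ − ∫ h dν|`, the supremum over 1-Lipschitz `h : ℝ → ℝ`. -/
noncomputable def wassersteinDist (μ ν : Measure ℝ) : ℝ :=
  ⨆ h : { h : ℝ → ℝ // LipschitzWith 1 h }, |(∫ x, h.1 x ∂μ) - ∫ x, h.1 x ∂ν|

/-- `ν` is the `μ`-zero biased distribution (for `μ` of mean zero and variance `σ²`):
`∫ x f(x) dμ = σ² ∫ f' dν` for every absolutely continuous `f` (written as the
indefinite integral of a locally interval-integrable `f'`) for which `∫ x f(x) dμ`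
exists. -/
def IsZeroBiased (μ : Measure ℝ) (σ2 : ℝ) (ν : Measure ℝ) : Prop :=
  ∀ f f' : ℝ → ℝ,
    (∀ x : ℝ, IntervalIntegrable f' volume 0 x) →
    (∀ x : ℝ, f x = f 0 + ∫ t in (0 : ℝ)..x, f' t) →
    Integrable (fun x => x * f x) μ → Integrable f' ν →
    ∫ x, x * f x ∂μ = σ2 * ∫ x, f' x ∂ν

/-! ### The Wasserstein distance -/

theorem wassersteinDist_nonneg (μ ν : Measure ℝ) : 0 ≤ wassersteinDist μ ν :=
  Real.iSup_nonneg fun _ => abs_nonneg _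

theorem integrable_of_lipschitz {μ : Measure ℝ} [IsFiniteMeasure μ]
    (hμ : Integrable (fun x : ℝ => x) μ) {K : NNReal} {h : ℝ → ℝ} (hh : LipschitzWith K h) :
    Integrable h μ := by
  refine Integrable.mono' ((integrable_const |h 0|).add (hμ.norm.const_mul (K : ℝ)))
    hh.continuous.aestronglyMeasurable (.of_forall fun x => ?_)
  have h1 := hh.dist_le_mul x 0
  simp only [Real.dist_eq, sub_zero] at h1
  have h2 := abs_sub_abs_le_abs_sub (h x) (h 0)
  simp only [Real.norm_eq_abs, Pi.add_apply]
  linarith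

/-- When `ν` has no first moment, the Bochner integral of `h` against `ν` takes the junk
value `0` at `h x = |x| + c` for every `c`, so the defining supremum is unbounded and takes the junk value `0`. -/
theorem wassersteinDist_eq_zero_of_not_integrable {μ ν : Measure ℝ} [IsProbabilityMeasure μ]
    [IsProbabilityMeasure ν] (hμ : Integrable (fun x : ℝ => x) μ)
    (hν : ¬ Integrable (fun x : ℝ => x) ν) : wassersteinDist μ ν = 0 := by
  apply Real.iSup_of_not_bddAbove
  rintro ⟨B, hB⟩
  have hl : LipschitzWith 1 (fun x : ℝ => |x| + (|B| + 1)) := by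
    refine LipschitzWith.of_dist_le_mul fun x y => ?_
    simpa [Real.dist_eq] using abs_abs_sub_abs_le_abs_sub x y
  have h1 := hB ⟨⟨_, hl⟩, rfl⟩
  have h2 : ¬ Integrable (fun x : ℝ => |x| + (|B| + 1)) ν := by
    intro hi
    apply hν
    have h3 := hi.sub (integrable_const (|B| + 1))
    refine h3.mono' continuous_id'.aestronglyMeasurable (.of_forall fun x => ?_)
    simp
  simp only [integral_undef h2, sub_zero] at h1
  rw [integral_add hμ.abs (integrable_const _)] at h1
  have h4 : 0 ≤ ∫ x, |x| ∂μ := integral_nonneg fun _ => abs_nonneg _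
  simp only [integral_const, probReal_univ, one_smul] at h1
  rw [abs_of_nonneg (by positivity)] at h1
  linarith [le_abs_self B]

/-- With finite first moments, both integrals differ from `h 0` by at most the first absolute
moment, so the supremum defining `wassersteinDist` is a genuine one. -/
theorem bddAbove_wasserstein {μ ν : Measure ℝ} [IsProbabilityMeasure μ]
    [IsProbabilityMeasure ν] (hμ : Integrable (fun x : ℝ => x) μ)
    (hν : Integrable (fun x : ℝ => x) ν) :
    BddAbove (Set.range fun h : { h : ℝ → ℝ // LipschitzWith 1 h } =>
      |(∫ x, h.1 x ∂μ) - ∫ x, h.1 x ∂ν|) := by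
  have key : ∀ (ρ : Measure ℝ) [IsProbabilityMeasure ρ], Integrable (fun x : ℝ => x) ρ →
      ∀ h : ℝ → ℝ, LipschitzWith 1 h → |(∫ x, h x ∂ρ) - h 0| ≤ ∫ x, |x| ∂ρ := by
    intro ρ _ hρ h hh
    have h1 : (∫ x, h x ∂ρ) - h 0 = ∫ x, (h x - h 0) ∂ρ := by
      rw [integral_sub (integrable_of_lipschitz hρ hh) (integrable_const _)]
      simp
    rw [h1]
    refine (norm_integral_le_integral_norm _).trans (integral_mono_of_nonneg
      (.of_forall fun x => norm_nonneg (h x - h 0)) hρ.abs (.of_forall fun x => ?_))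
    simpa [Real.dist_eq] using hh.dist_le_mul x 0
  refine ⟨(∫ x, |x| ∂μ) + ∫ x, |x| ∂ν, ?_⟩
  rintro _ ⟨⟨h, hh⟩, rfl⟩
  have h1 := abs_le.1 (key μ hμ h hh)
  have h2 := abs_le.1 (key ν hν h hh)
  exact abs_le.2 ⟨by linarith, by linarith⟩

/-- For `h` 1-Lipschitz, `w ↦ h (a * w + b)` is `|a|`-Lipschitz, and the distance scales. -/
theorem abs_integral_affine_sub_le {μ ν : Measure ℝ} [IsProbabilityMeasure μ]
    [IsProbabilityMeasure ν] (hμ : Integrable (fun x : ℝ => x) μ)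
    (hν : Integrable (fun x : ℝ => x) ν) {h : ℝ → ℝ} (hh : LipschitzWith 1 h) (a b : ℝ) :
    |(∫ w, h (a * w + b) ∂μ) - ∫ w, h (a * w + b) ∂ν| ≤ |a| * wassersteinDist μ ν := by
  rcases eq_or_ne a 0 with rfl | ha
  · simp
  have ha' : 0 < |a| := abs_pos.2 ha
  have hl : LipschitzWith 1 (fun w => |a|⁻¹ * h (a * w + b)) := by
    refine LipschitzWith.of_dist_le_mul fun x y => ?_
    have h1 := hh.dist_le_mul (a * x + b) (a * y + b)
    simp only [Real.dist_eq, NNReal.coe_one, one_mul] at h1 ⊢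
    rw [← mul_sub, abs_mul, abs_inv, abs_abs, inv_mul_le_iff₀ ha', ← abs_mul]
    have h3 : a * x + b - (a * y + b) = a * (x - y) := by ring
    rwa [h3] at h1
  have h2 := le_ciSup (bddAbove_wasserstein hμ hν) ⟨_, hl⟩
  simp only [integral_const_mul, ← mul_sub] at h2
  rw [abs_mul, abs_inv, abs_abs, inv_mul_le_iff₀ ha'] at h2
  exact h2

/-! ### Resampling one coordinate of a product measure -/

/-- Resampling the `i`-th coordinate from `μ` leaves the product measure unchanged. -/
theorem measurePreserving_update {k : ℕ} (μ : Measure ℝ) [IsProbabilityMeasure μ] (i : Fin k) :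
    MeasurePreserving (fun p : (Fin k → ℝ) × ℝ => Function.update p.1 i p.2)
      ((Measure.pi fun _ : Fin k => μ).prod μ) (Measure.pi fun _ : Fin k => μ) := by
  have hmeas : Measurable (fun p : (Fin k → ℝ) × ℝ => Function.update p.1 i p.2) := by
    refine measurable_pi_iff.2 fun j => ?_
    rcases eq_or_ne j i with rfl | hj
    · simpa using measurable_snd
    · simp only [Function.update_of_ne hj]
      exact (measurable_pi_apply j).comp measurable_fst
  refine ⟨hmeas, (Measure.pi_eq fun s hs => ?_).symm⟩
  rw [Measure.map_apply hmeas (MeasurableSet.univ_pi hs)]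
  have hpre : (fun p : (Fin k → ℝ) × ℝ => Function.update p.1 i p.2) ⁻¹' (Set.univ.pi s)
      = (Set.univ.pi (Function.update s i Set.univ)) ×ˢ s i := by
    ext ⟨x, w⟩
    simp only [Set.mem_preimage, Set.mem_pi, Set.mem_univ, true_implies, Set.mem_prod]
    constructor
    · intro h
      refine ⟨fun j => ?_, by simpa using h i⟩
      rcases eq_or_ne j i with rfl | hj
      · simp
      · simpa [Function.update_of_ne hj] using h j
    · rintro ⟨h1, h2⟩ j
      rcases eq_or_ne j i with rfl | hj
      · simpa using h2
      · simpa [Function.update_of_ne hj] using h1 j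
  rw [hpre, Measure.prod_prod, Measure.pi_pi, ← Finset.prod_erase_mul _ _ (Finset.mem_univ i),
    ← Finset.prod_erase_mul (a := i) _ (fun j => μ (s j)) (Finset.mem_univ i)]
  simp only [Function.update_self, measure_univ, mul_one]
  congr 1
  refine Finset.prod_congr rfl fun j hj => ?_
  rw [Function.update_of_ne (Finset.ne_of_mem_erase hj)]

/-- The sum `∑ j, a j * x j` with its `i`-th variable `x i` replaced by `w`, as a function of
`(x, w)`. -/
def replaceSum {k : ℕ} (a : Fin k → ℝ) (i : Fin k) (p : (Fin k → ℝ) × ℝ) : ℝ :=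
  ∑ j, a j * Function.update p.1 i p.2 j

theorem replaceSum_eq {k : ℕ} (a : Fin k → ℝ) (i : Fin k) (x : Fin k → ℝ) (w : ℝ) :
    replaceSum a i (x, w) = a i * w + replaceSum a i (x, 0) := by
  unfold replaceSum
  rw [← Finset.add_sum_erase _ _ (Finset.mem_univ i),
    ← Finset.add_sum_erase _ (fun j => a j * Function.update x i 0 j) (Finset.mem_univ i)]
  simp only [Function.update_self, mul_zero, zero_add]
  congr 1
  refine Finset.sum_congr rfl fun j hj => ?_
  simp [Function.update_of_ne (Finset.ne_of_mem_erase hj)]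

theorem continuous_replaceSum {k : ℕ} (a : Fin k → ℝ) (i : Fin k) :
    Continuous (replaceSum a i) := by
  unfold replaceSum
  have : Continuous (fun p : (Fin k → ℝ) × ℝ => Function.update p.1 i p.2) :=
    continuous_fst.update i continuous_snd
  fun_prop

theorem memLp_sum {k : ℕ} {μ : Measure ℝ} [IsProbabilityMeasure μ]
    (hμ : MemLp (fun x : ℝ => x) 2 μ) (a : Fin k → ℝ) :
    MemLp (fun x : Fin k → ℝ => ∑ j, a j * x j) 2 (Measure.pi fun _ : Fin k => μ) :=
  memLp_finsetSum _ fun j _ =>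
    (hμ.comp_measurePreserving (measurePreserving_eval (fun _ : Fin k => μ) j)).const_mul (a j)

/-! ### The mixture representation of the zero biased law -/

theorem abs_primitive_le {h : ℝ → ℝ} {M : ℝ} (hM : ∀ x, |h x| ≤ M) (x : ℝ) :
    |∫ t in (0 : ℝ)..x, h t| ≤ M * |x| := by
  simpa using intervalIntegral.norm_integral_le_of_norm_le_const (a := 0) (b := x) (f := h)
    (C := M) fun t _ => hM t

theorem continuous_primitive_of_continuous {h : ℝ → ℝ} (hc : Continuous h) :
    Continuous fun x => ∫ t in (0 : ℝ)..x, h t :=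
  intervalIntegral.continuous_primitive (fun _ _ => hc.intervalIntegrable _ _) 0

theorem memLp_primitive_comp {Ω : Type*} [MeasurableSpace Ω] {P : Measure Ω} {X : Ω → ℝ}
    (hX : MemLp X 2 P) {h : ℝ → ℝ} (hc : Continuous h) {M : ℝ} (hM : ∀ x, |h x| ≤ M) :
    MemLp (fun ω => ∫ t in (0 : ℝ)..X ω, h t) 2 P := by
  refine (hX.const_mul M).of_le
    ((continuous_primitive_of_continuous hc).comp_aestronglyMeasurable hX.1)
    (.of_forall fun ω => ?_)
  have hM0 : 0 ≤ M := (abs_nonneg _).trans (hM 0)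
  simpa [abs_mul, abs_of_nonneg hM0] using abs_primitive_le hM (X ω)

/-- The zero bias identity for the test function `w ↦ f (a * w + b)`, where `f` is the primitive
of a bounded continuous function `h`. -/
theorem IsZeroBiased.integral_affine {μ ν : Measure ℝ} [IsProbabilityMeasure μ]
    [IsProbabilityMeasure ν] (hμ : MemLp (fun x : ℝ => x) 2 μ) (hzb : IsZeroBiased μ 1 ν)
    {h : ℝ → ℝ} (hc : Continuous h) {M : ℝ} (hM : ∀ x, |h x| ≤ M) (a b : ℝ) :
    ∫ w, w * (∫ t in (0 : ℝ)..(a * w + b), h t) ∂μ = a * ∫ w, h (a * w + b) ∂ν := by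
  have hc' : Continuous (fun w => h (a * w + b) * a) := by fun_prop
  have hd : ∀ w, HasDerivAt (fun w => ∫ t in (0 : ℝ)..(a * w + b), h t) (h (a * w + b) * a) w := by
    intro w
    have h1 := intervalIntegral.integral_hasDerivAt_right (hc.intervalIntegrable 0 (a * w + b))
      (hc.stronglyMeasurableAtFilter _ _) hc.continuousAt
    have h2 : HasDerivAt (fun w => a * w + b) a w := by
      simpa using ((hasDerivAt_id w).const_mul a).add_const b
    exact h1.comp w h2
  have hX : MemLp (fun w : ℝ => a * w + b) 2 μ := (hμ.const_mul a).add (memLp_const b)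
  have hi : Integrable (fun w => h (a * w + b) * a) ν := by
    refine Integrable.of_bound hc'.aestronglyMeasurable (M * |a|) (.of_forall fun w => ?_)
    rw [Real.norm_eq_abs, abs_mul]
    exact mul_le_mul_of_nonneg_right (hM _) (abs_nonneg a)
  have := hzb (fun w => ∫ t in (0 : ℝ)..(a * w + b), h t) (fun w => h (a * w + b) * a)
    (fun x => hc'.intervalIntegrable 0 x)
    (fun x => by
      rw [intervalIntegral.integral_eq_sub_of_hasDerivAt (fun w _ => hd w)
        (hc'.intervalIntegrable 0 x)]
      ring)
    (hμ.integrable_mul (memLp_primitive_comp hX hc hM)) hi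
  rw [this, one_mul, integral_mul_const, mul_comm]

/-- One summand of `E[Y f(Y)]`: conditioning on all coordinates but the `i`-th one reduces it to
the zero bias identity for `μ`. -/
theorem integral_coord_mul {k : ℕ} (a : Fin k → ℝ) (i : Fin k) {μ ν : Measure ℝ}
    [IsProbabilityMeasure μ] [IsProbabilityMeasure ν] (hμ : MemLp (fun x : ℝ => x) 2 μ)
    (hzb : IsZeroBiased μ 1 ν) {h : ℝ → ℝ} (hc : Continuous h) {M : ℝ} (hM : ∀ x, |h x| ≤ M) :
    ∫ x, x i * (∫ t in (0 : ℝ)..(∑ j, a j * x j), h t) ∂(Measure.pi fun _ : Fin k => μ) =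
      a i * ∫ p, h (replaceSum a i p) ∂((Measure.pi fun _ : Fin k => μ).prod ν) := by
  have hprod : Integrable (fun x : Fin k → ℝ => x i * (∫ t in (0 : ℝ)..(∑ j, a j * x j), h t))
      (Measure.pi fun _ : Fin k => μ) :=
    (hμ.comp_measurePreserving (measurePreserving_eval (fun _ : Fin k => μ) i)).integrable_mul
      (memLp_primitive_comp (memLp_sum hμ a) hc hM)
  have hmp := measurePreserving_update μ i
  have hprod2 : Integrable (fun p : (Fin k → ℝ) × ℝ => Function.update p.1 i p.2 i *
      (∫ t in (0 : ℝ)..(∑ j, a j * Function.update p.1 i p.2 j), h t))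
      ((Measure.pi fun _ : Fin k => μ).prod μ) := hmp.integrable_comp_of_integrable hprod
  have hprod3 : Integrable (fun p => h (replaceSum a i p))
      ((Measure.pi fun _ : Fin k => μ).prod ν) :=
    Integrable.of_bound (hc.comp (continuous_replaceSum a i)).aestronglyMeasurable M
      (.of_forall fun p => hM _)
  rw [← hmp.map_eq, integral_map hmp.measurable.aemeasurable (by
    rw [hmp.map_eq]; exact hprod.1), hmp.map_eq, integral_prod _ hprod2, integral_prod _ hprod3,
    ← integral_const_mul]
  refine integral_congr_ae (.of_forall fun x => ?_)
  have h1 := hzb.integral_affine hμ hc hM (a i) (replaceSum a i (x, 0))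
  simp only [← replaceSum_eq] at h1
  simpa [replaceSum] using h1

/-- The zero biased law of `∑ j, a j * W j` is the mixture, with weights `a i ^ 2`, of the laws of the
sums in which `W i` is replaced by an independent variable of law `ν`. -/
theorem zeroBiased_eq_mixture {k : ℕ} (a : Fin k → ℝ) {μ ν μY νY : Measure ℝ}
    [IsProbabilityMeasure μ] [IsProbabilityMeasure ν] [IsProbabilityMeasure νY]
    (hμ : MemLp (fun x : ℝ => x) 2 μ) (hzb : IsZeroBiased μ 1 ν)
    (hμY : μY = Measure.map (fun x : Fin k → ℝ => ∑ j, a j * x j)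
      (Measure.pi fun _ : Fin k => μ))
    (hzbY : IsZeroBiased μY 1 νY) :
    νY = ∑ i, ENNReal.ofReal (a i ^ 2) •
      Measure.map (replaceSum a i) ((Measure.pi fun _ : Fin k => μ).prod ν) := by
  have hLm : Measurable (fun x : Fin k → ℝ => ∑ j, a j * x j) := by fun_prop
  have hpY : IsProbabilityMeasure μY := hμY ▸ Measure.isProbabilityMeasure_map hLm.aemeasurable
  have hμY2 : MemLp (fun x : ℝ => x) 2 μY := by
    rw [hμY, memLp_map_measure_iff continuous_id'.aestronglyMeasurable hLm.aemeasurable]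
    exact memLp_sum hμ a
  have hfin : ∀ i, IsFiniteMeasure (ENNReal.ofReal (a i ^ 2) •
      Measure.map (replaceSum a i) ((Measure.pi fun _ : Fin k => μ).prod ν)) := fun i =>
    Measure.smul_finite _ ENNReal.ofReal_ne_top
  refine ext_of_forall_integral_eq_of_IsFiniteMeasure fun h => ?_
  have hM : ∀ x, |h x| ≤ ‖h‖ := fun x => h.norm_coe_le_norm x
  have hc := h.continuous
  have h1 := hzbY.integral_affine hμY2 hc hM 1 0
  simp only [one_mul, add_zero] at h1
  have hprim := continuous_primitive_of_continuous hc
  rw [integral_finsetSum_measure fun i _ => h.integrable _, ← h1, hμY,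
    integral_map hLm.aemeasurable (by fun_prop)]
  simp only [Finset.sum_mul]
  rw [integral_finsetSum]
  · refine Finset.sum_congr rfl fun i _ => ?_
    rw [integral_smul_measure, ENNReal.toReal_ofReal (sq_nonneg _),
      integral_map (continuous_replaceSum a i).measurable.aemeasurable hc.aestronglyMeasurable]
    simp only [mul_assoc]
    rw [integral_const_mul, integral_coord_mul a i hμ hzb hc hM, smul_eq_mul]
    ring
  · intro i _
    simp only [mul_assoc]
    exact ((hμ.comp_measurePreserving
      (measurePreserving_eval (fun _ : Fin k => μ) i)).integrable_mul
      (memLp_primitive_comp (memLp_sum hμ a) hc hM)).const_mul (a i)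

/-! ### The contraction -/

theorem wassersteinDist_contraction {k : ℕ} (a : Fin k → ℝ) (ha : ∑ i, a i ^ 2 = 1)
    {μ ν μY νY : Measure ℝ}
    [IsProbabilityMeasure μ] [IsProbabilityMeasure ν] [IsProbabilityMeasure νY]
    (hμ : MemLp (fun x : ℝ => x) 2 μ) (hzb : IsZeroBiased μ 1 ν)
    (hμY : μY = Measure.map (fun x : Fin k → ℝ => ∑ j, a j * x j)
      (Measure.pi fun _ : Fin k => μ))
    (hzbY : IsZeroBiased μY 1 νY) :
    wassersteinDist μY νY ≤ (∑ i, |a i| ^ 3) * wassersteinDist μ ν := by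
  have hmix := zeroBiased_eq_mixture a hμ hzb hμY hzbY
  have hLm : Measurable (fun x : Fin k → ℝ => ∑ j, a j * x j) := by fun_prop
  have hpY : IsProbabilityMeasure μY := hμY ▸ Measure.isProbabilityMeasure_map hLm.aemeasurable
  have hTm : ∀ i, Measurable (replaceSum a i) := fun i => (continuous_replaceSum a i).measurable
  have hμ1 : Integrable (fun x : ℝ => x) μ := hμ.integrable (by norm_num)
  have hμY1 : Integrable (fun x : ℝ => x) μY := by
    rw [hμY, integrable_map_measure continuous_id'.aestronglyMeasurable hLm.aemeasurable]
    exact (memLp_sum hμ a).integrable (by norm_num)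
  have hRHS : 0 ≤ (∑ i, |a i| ^ 3) * wassersteinDist μ ν :=
    mul_nonneg (Finset.sum_nonneg fun i _ => by positivity) (wassersteinDist_nonneg _ _)
  by_cases hνY : Integrable (fun x : ℝ => x) νY
  swap
  · rw [wassersteinDist_eq_zero_of_not_integrable hμY1 hνY]; exact hRHS
  have hmeq : ∀ i, μY = Measure.map (replaceSum a i) ((Measure.pi fun _ : Fin k => μ).prod μ) := by
    intro i
    have hmp := measurePreserving_update μ i
    rw [hμY, ← hmp.map_eq, Measure.map_map hLm hmp.measurable, hmp.map_eq]
    rfl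
  -- A nonzero weight exists, and the corresponding component of the mixture is integrable.
  have hν : Integrable (fun x : ℝ => x) ν := by
    obtain ⟨i, hi⟩ : ∃ i, a i ≠ 0 := by
      by_contra! hcon
      simp [hcon] at ha
    rw [hmix, integrable_finsetSum_measure] at hνY
    have h1 := hνY i (Finset.mem_univ i)
    rw [integrable_smul_measure (by simp [hi]) ENNReal.ofReal_ne_top,
      integrable_map_measure continuous_id'.aestronglyMeasurable (hTm i).aemeasurable] at h1
    obtain ⟨x, hx⟩ := h1.prod_right_ae.exists
    have hx' : Integrable (fun w => a i * w + replaceSum a i (x, 0)) ν := by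
      simp only [← replaceSum_eq]
      exact hx
    have h2 := (hx'.sub (integrable_const (replaceSum a i (x, 0)))).const_mul (a i)⁻¹
    refine h2.congr (.of_forall fun w => ?_)
    simp [hi]
  refine Real.iSup_le ?_ hRHS
  rintro ⟨h, hh⟩
  simp only
  have hiY := integrable_of_lipschitz hνY hh
  have hiY' := integrable_of_lipschitz hμY1 hh
  have hiν : ∀ i, a i ≠ 0 → Integrable (fun p => h (replaceSum a i p))
      ((Measure.pi fun _ : Fin k => μ).prod ν) := by
    intro i hi
    rw [hmix, integrable_finsetSum_measure] at hiY
    have h1 := hiY i (Finset.mem_univ i)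
    rwa [integrable_smul_measure (by simp [hi]) ENNReal.ofReal_ne_top,
      integrable_map_measure hh.continuous.aestronglyMeasurable (hTm i).aemeasurable] at h1
  have hiμ : ∀ i, Integrable (fun p => h (replaceSum a i p))
      ((Measure.pi fun _ : Fin k => μ).prod μ) := by
    intro i
    rw [hmeq i] at hiY'
    rwa [integrable_map_measure hh.continuous.aestronglyMeasurable (hTm i).aemeasurable] at hiY'
  have e1 : ∫ y, h y ∂νY = ∑ i, a i ^ 2 *
      ∫ p, h (replaceSum a i p) ∂((Measure.pi fun _ : Fin k => μ).prod ν) := by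
    rw [hmix] at hiY ⊢
    rw [integral_finsetSum_measure (integrable_finsetSum_measure.1 hiY)]
    refine Finset.sum_congr rfl fun i _ => ?_
    rw [integral_smul_measure, ENNReal.toReal_ofReal (sq_nonneg _),
      integral_map (hTm i).aemeasurable hh.continuous.aestronglyMeasurable, smul_eq_mul]
  have e2 : ∫ y, h y ∂μY = ∑ i, a i ^ 2 *
      ∫ p, h (replaceSum a i p) ∂((Measure.pi fun _ : Fin k => μ).prod μ) := by
    rw [← one_mul (∫ y, h y ∂μY), ← ha, Finset.sum_mul]
    refine Finset.sum_congr rfl fun i _ => ?_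
    rw [← integral_map (hTm i).aemeasurable hh.continuous.aestronglyMeasurable, ← hmeq i]
  rw [e1, e2, ← Finset.sum_sub_distrib, Finset.sum_mul]
  refine (Finset.abs_sum_le_sum_abs _ _).trans (Finset.sum_le_sum fun i _ => ?_)
  rcases eq_or_ne (a i) 0 with hi | hi
  · simp [hi]
  have hb : |(∫ p, h (replaceSum a i p) ∂((Measure.pi fun _ : Fin k => μ).prod μ)) -
      ∫ p, h (replaceSum a i p) ∂((Measure.pi fun _ : Fin k => μ).prod ν)| ≤
      |a i| * wassersteinDist μ ν := by
    rw [integral_prod _ (hiμ i), integral_prod _ (hiν i hi),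
      ← integral_sub (hiμ i).integral_prod_left (hiν i hi).integral_prod_left]
    have := norm_integral_le_of_norm_le_const (μ := Measure.pi fun _ : Fin k => μ)
      (f := fun x => (∫ w, h (replaceSum a i (x, w)) ∂μ) - ∫ w, h (replaceSum a i (x, w)) ∂ν)
      (C := |a i| * wassersteinDist μ ν) (.of_forall fun x => by
        have h1 := abs_integral_affine_sub_le hμ1 hν hh (a i) (replaceSum a i (x, 0))
        simp only [← replaceSum_eq] at h1
        exact h1)
    simpa using this
  rw [← mul_sub, abs_mul, abs_of_nonneg (sq_nonneg (a i)), ← sq_abs]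
  calc |a i| ^ 2 * _ ≤ |a i| ^ 2 * (|a i| * wassersteinDist μ ν) := by gcongr
    _ = _ := by ring

/-! ### When the contraction is strict -/

theorem sum_abs_cube_lt_one_iff {k : ℕ} (a : Fin k → ℝ) (ha : ∑ i, a i ^ 2 = 1) :
    ∑ i, |a i| ^ 3 < 1 ↔ ¬ ∃ (i : Fin k) (c : ℝ), a = c • (Pi.single i 1 : Fin k → ℝ) := by
  have hle : ∀ i, |a i| ≤ 1 := by
    intro i
    have := Finset.single_le_sum (f := fun i => a i ^ 2) (fun i _ => sq_nonneg _)
      (Finset.mem_univ i)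
    rw [← sq_le_one_iff_abs_le_one]
    linarith
  constructor
  · rintro hlt ⟨i, c, rfl⟩
    have h1 : ∀ j, (c • (Pi.single i 1 : Fin k → ℝ)) j = if j = i then c else 0 := by
      intro j
      simp [Pi.single_apply]
    simp only [h1, ite_pow, apply_ite abs, abs_zero] at hlt ha
    simp at hlt ha
    rcases ha with rfl | rfl <;> norm_num at hlt
  · intro hne
    by_contra! hge
    apply hne
    -- `∑ a² (1 - |a|) ≤ 0` has nonnegative terms, so each `a i` is `0` or `±1`.
    have hterm : ∀ i, 0 ≤ a i ^ 2 - |a i| ^ 3 := by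
      intro i
      rw [← sq_abs]
      nlinarith [mul_nonneg (sq_nonneg |a i|) (sub_nonneg.2 (hle i))]
    have hsum : ∑ i, (a i ^ 2 - |a i| ^ 3) = 0 := by
      apply le_antisymm _ (Finset.sum_nonneg fun i _ => hterm i)
      rw [Finset.sum_sub_distrib]
      linarith
    have hz := (Finset.sum_eq_zero_iff_of_nonneg fun i _ => hterm i).1 hsum
    obtain ⟨i, hi⟩ : ∃ i, a i ≠ 0 := by
      by_contra! hcon
      simp [hcon] at ha
    have hi1 : a i ^ 2 = 1 := by
      have h1 := hz i (Finset.mem_univ i)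
      rw [← sq_abs] at h1 ⊢
      have h2 : |a i| ^ 2 * (1 - |a i|) = 0 := by linarith
      rcases mul_eq_zero.1 h2 with h3 | h3
      · simp [hi] at h3
      · have : |a i| = 1 := by linarith
        simp [this]
    have hrest : ∑ j ∈ Finset.univ.erase i, a j ^ 2 = 0 := by
      have := Finset.add_sum_erase Finset.univ (fun j => a j ^ 2) (Finset.mem_univ i)
      linarith
    have hr := (Finset.sum_eq_zero_iff_of_nonneg fun j _ => sq_nonneg (a j)).1 hrest
    refine ⟨i, a i, funext fun j => ?_⟩
    rcases eq_or_ne j i with rfl | hj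
    · simp
    · simpa [hj] using hr j (Finset.mem_erase.2 ⟨hj, Finset.mem_univ j⟩)

/-- for `α ∈ ℝ^k` with `λ = ‖α‖ ≠ 0`, `W` of mean zero and variance one
with law `μ`, `W*` zero biased with law `ν`, and `Y = Σ_i (α_i/λ) W_i` (the `W_i`
i.i.d. copies of `W`) with law `μY` and zero biased law `νY`, we have
`d(Y, Y*) ≤ φ d(W, W*)` with `φ = Σ|α_i|³/λ³`; moreover `φ < 1` iff `α` is not a
scalar multiple of a standard basis vector. -/
theorem zeroBias_contraction {k : ℕ} (α : Fin k → ℝ) (hα : α ≠ 0)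
    (lam : ℝ) (hlam : lam = Real.sqrt (∑ i, α i ^ 2))
    (μ ν : Measure ℝ) [IsProbabilityMeasure μ] [IsProbabilityMeasure ν]
    (hmean : ∫ x, x ∂μ = 0) (hm2 : Integrable (fun x => x ^ 2) μ)
    (hvar : ∫ x, x ^ 2 ∂μ = 1)
    (hzb : IsZeroBiased μ 1 ν)
    (μY : Measure ℝ)
    (hμY : μY = Measure.map (fun x : Fin k → ℝ => ∑ i, (α i / lam) * x i)
      (Measure.pi fun _ : Fin k => μ))
    (νY : Measure ℝ) [IsProbabilityMeasure νY]
    (hzbY : IsZeroBiased μY 1 νY)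
    (φ : ℝ) (hφ : φ = (∑ i, |α i| ^ 3) / lam ^ 3) :
    wassersteinDist μY νY ≤ φ * wassersteinDist μ ν ∧
    (φ < 1 ↔ ¬ ∃ (i : Fin k) (c : ℝ), α = c • (Pi.single i 1 : Fin k → ℝ)) := by
  have hspos : 0 < ∑ i, α i ^ 2 := by
    obtain ⟨i, hi⟩ := Function.ne_iff.1 hα
    exact Finset.sum_pos' (fun i _ => sq_nonneg _)
      ⟨i, Finset.mem_univ i, sq_pos_of_ne_zero (by simpa using hi)⟩
  have hlpos : 0 < lam := hlam ▸ Real.sqrt_pos.2 hspos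
  have hlsq : lam ^ 2 = ∑ i, α i ^ 2 := by rw [hlam, Real.sq_sqrt hspos.le]
  have ha : ∑ i, (α i / lam) ^ 2 = 1 := by
    simp only [div_pow]
    rw [← Finset.sum_div, ← hlsq, div_self (by positivity)]
  have hφ' : φ = ∑ i, |α i / lam| ^ 3 := by
    simp only [abs_div, abs_of_pos hlpos, div_pow]
    rw [hφ, Finset.sum_div]
  have hL2 : MemLp (fun x : ℝ => x) 2 μ :=
    (memLp_two_iff_integrable_sq continuous_id'.aestronglyMeasurable).2 hm2
  rw [hφ']
  refine ⟨wassersteinDist_contraction (fun i => α i / lam) ha hL2 hzb hμY hzbY, ?_⟩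
  rw [sum_abs_cube_lt_one_iff (fun i => α i / lam) ha, not_iff_not]
  constructor
  · rintro ⟨i, c, h⟩
    refine ⟨i, lam * c, funext fun j => ?_⟩
    have hj := congrFun h j
    simp only [Pi.smul_apply, smul_eq_mul] at hj ⊢
    rw [mul_assoc, ← hj, mul_div_cancel₀ _ hlpos.ne']
  · rintro ⟨i, c, h⟩
    refine ⟨i, c / lam, funext fun j => ?_⟩
    simp only [h, Pi.smul_apply, smul_eq_mul]
    ring
end

section
/- Let a < b, k ≥ 2, and F : [a,b]^k → [a,b] twice continuously differentiable. Let X_0 be a nonconstant random variable with P(X_0 ∈ [a,b]) = 1 and define X_{n+1} = F(X_{n,1},…,X_{n,k}) with X_{n,i} independent copies of X_n. Suppose F is averaging, or scaled averaging and positively homogeneous, and that X_n converges in probability to a constant c. Let c_n = E X_n, α_n = F′(c_n,…,c_n) (the gradient at the point with all coordinates c_n), Z_n = F(X_{n,1},…,X_{n,k}) − α_n · (X_{n,1},…,X_{n,k}), and λ = ‖F′(c,…,c)‖ (Euclidean norm). Then for every real p ≥ 1 and every ε > 0 there exist constants C_{Z,p} and C_{X,p} such that for all n ≥ 0: E|Z_n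 − E Z_n|^p ≤ C_{Z,p}^p (λ+ε)^{2pn} and E|X_n − c_n|^p ≤ C_{X,p}^p (λ+ε)^{pn}. -/
/-!
The difficulty is that the gradient at `c` controls `F` only near the point `(c, …, c)`, while
convergence in probability says nothing about rates. The first step therefore shows that the event
of leaving a fixed neighbourhood of `c` has probability decaying faster than any prescribed
geometric rate. For averaging `F` take the potential `w x = max (|x - c| - δ / 2) 0`. Property (1)
bounds `w (F x)` by the largest `w (x i)`, and if only one input has positive potential then `w` is
contracted by a factor `ρ < 1`: near the edge of the neighbourhood because each partial derivative
at `c` is at most `λ < 1` in absolute value, far from it because properties (2) and (3) make `F`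
strictly smaller than an isolated maximal input. Two inputs of positive potential are rare since
`X_n → c`. Hence `E w ^ P` contracts by about `k * ρ ^ P`, which is as small as desired for large
`P` (`HierSeq.potential_decay`, `HierSeq.nearLinear_of_averaging`). In the scaled case, either the
scaling constant is `1` and `F` is averaging, or the cube contains the origin and homogeneity
together with differentiability there makes `F` linear (`nearLinear_of_hypotheses`).

Off the rare event, `F` is affine with gradient `F'(c, …, c)` up to an arbitrarily small slope
(`HierSeq.NearLinear`). By independence the variance then satisfies
`V (n + 1) ≤ (λ ^ 2 + small) * V n + C * (λ + ε) ^ (2 * n)`, which gives the case `p = 2`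
(`HierSeq.second_moment`). Moments of order `2 * q` follow from those of order `q`: a single
dominant deviation is contracted with total weight `∑ |α i| ^ (2 * q) ≤ λ ^ (2 * q)`, and two
comparable deviations give a product of two independent moments of order `q`
(`HierSeq.moment_double`). This reaches all powers of two, and real exponents by interpolation.
Finally `Z_n` is, up to a constant, the Taylor remainder at `(c_n, …, c_n)`, which is quadratic in
the deviations `X_{n,i} - c_n` because the derivative is Lipschitz on the cube; its moments
therefore decay at the squared rate (`HierSeq.moment_bounds`). If `λ + ε ≥ 1`, boundedness suffices.
-/

open MeasureTheory Filter

/-- Property (3) of averaging functions. -/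
def AveragingProp3 (D : Set ℝ) (k : ℕ) (F : (Fin k → ℝ) → ℝ) : Prop :=
  ∀ x ∈ D, ∀ y ∈ D, x < y → ∀ i₁ i₂ : Fin k, i₁ ≠ i₂ →
    ∃ z : Fin k → ℝ, (∀ i, z i = x ∨ z i = y) ∧ z i₁ = x ∧ z i₂ = y ∧
      x < F z ∧ F z < y

/-- A function `F : D^k → D` is averaging if (1) `min_i x_i ≤ F x ≤ max_i x_i`
(expressed as `∃ i, x i ≤ F x` and `∃ i, F x ≤ x i`), (2) it is monotone, and (3)
it satisfies `AveragingProp3`. -/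
def Averaging (D : Set ℝ) (k : ℕ) (F : (Fin k → ℝ) → ℝ) : Prop :=
  (∀ x : Fin k → ℝ, (∀ i, x i ∈ D) → (∃ i, x i ≤ F x) ∧ (∃ i, F x ≤ x i)) ∧
  (∀ x y : Fin k → ℝ, (∀ i, x i ∈ D) → (∀ i, y i ∈ D) → (∀ i, x i ≤ y i) →
    F x ≤ F y) ∧
  AveragingProp3 D k F

/-! ### Hierarchical sequences of laws -/

/-- A hierarchical sequence of laws on `[a, b]`: `ν (n + 1)` is the law of `F` evaluated at `k`
independent samples of `ν n`. Here `F` is continuous on all of `ℝᵏ`; a function that is continuous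
on the box only is first composed with the retraction onto the box. -/
structure HierSeq (a b : ℝ) {k : ℕ} (F : (Fin k → ℝ) → ℝ) (ν : ℕ → Measure ℝ) : Prop where
  prob : ∀ n, IsProbabilityMeasure (ν n)
  supp : ∀ n, ∀ᵐ x ∂ν n, x ∈ Set.Icc a b
  cont : Continuous F
  maps : ∀ x, (∀ i, x i ∈ Set.Icc a b) → F x ∈ Set.Icc a b
  step : ∀ n, ν (n + 1) = Measure.map F (Measure.pi fun _ : Fin k => ν n)

namespace HierSeq

variable {a b : ℝ} {k : ℕ} {F : (Fin k → ℝ) → ℝ} {ν : ℕ → Measure ℝ}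

lemma ae_box (h : HierSeq a b F ν) (n : ℕ) :
    ∀ᵐ x ∂(Measure.pi fun _ : Fin k => ν n), ∀ i, x i ∈ Set.Icc a b := by
  have := h.prob
  rw [ae_all_iff]
  intro i
  exact (measurePreserving_eval (fun _ : Fin k => ν n) i).quasiMeasurePreserving.ae (h.supp n)

lemma integrable (h : HierSeq a b F ν) (n : ℕ) {f : ℝ → ℝ} (hf : Continuous f) :
    Integrable f (ν n) := by
  have := h.prob
  have h1 : IntegrableOn f (Set.Icc a b) (ν n) :=
    ContinuousOn.integrableOn_compact isCompact_Icc hf.continuousOn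
  rwa [IntegrableOn, Measure.restrict_eq_self_of_ae_mem (h.supp n)] at h1

lemma integrable_pi (h : HierSeq a b F ν) (n : ℕ) {f : (Fin k → ℝ) → ℝ} (hf : Continuous f) :
    Integrable f (Measure.pi fun _ : Fin k => ν n) := by
  have := h.prob
  have h1 : IntegrableOn f (Set.Icc (fun _ => a) (fun _ => b)) (Measure.pi fun _ : Fin k => ν n) :=
    ContinuousOn.integrableOn_compact isCompact_Icc hf.continuousOn
  rwa [IntegrableOn, Measure.restrict_eq_self_of_ae_mem] at h1
  filter_upwards [h.ae_box n] with x hx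
  exact ⟨fun i => (hx i).1, fun i => (hx i).2⟩

lemma integral_step (h : HierSeq a b F ν) (n : ℕ) {f : ℝ → ℝ} (hf : Continuous f) :
    ∫ x, f x ∂ν (n + 1) = ∫ x, f (F x) ∂(Measure.pi fun _ : Fin k => ν n) := by
  rw [h.step n, integral_map h.cont.aemeasurable hf.aestronglyMeasurable]

lemma integral_eval (h : HierSeq a b F ν) (n : ℕ) {f : ℝ → ℝ} (hf : Continuous f) (i : Fin k) :
    ∫ x, f (x i) ∂(Measure.pi fun _ : Fin k => ν n) = ∫ x, f x ∂ν n := by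
  have := h.prob
  exact integral_comp_eval (μ := fun _ : Fin k => ν n) (i := i) hf.aestronglyMeasurable

lemma integral_eval_mul (h : HierSeq a b F ν) (n : ℕ) (f g : ℝ → ℝ) {i j : Fin k} (hij : i ≠ j) :
    ∫ x, f (x i) * g (x j) ∂(Measure.pi fun _ : Fin k => ν n)
      = (∫ x, f x ∂ν n) * ∫ x, g x ∂ν n := by
  have := h.prob
  have key := integral_fintype_prod_eq_prod (ι := Fin k) (𝕜 := ℝ) (E := fun _ => ℝ)
    (fun l x => if l = i then f x else if l = j then g x else 1) (μ := fun _ => ν n)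
  have e1 : ∀ (u v : Fin k → ℝ), (∏ l, if l = i then u l else if l = j then v l else 1)
      = u i * v j := by
    intro u v
    rw [← Finset.mul_prod_erase _ _ (Finset.mem_univ i),
      ← Finset.mul_prod_erase _ _ (Finset.mem_erase.2 ⟨hij.symm, Finset.mem_univ j⟩)]
    rw [Finset.prod_eq_one]
    · simp [hij.symm]
    · intro l hl
      simp only [Finset.mem_erase] at hl
      simp [hl.1, hl.2.1]
  rw [show (fun x : Fin k → ℝ => f (x i) * g (x j)) = fun x => ∏ l, (if l = i then f (x l) else
    if l = j then g (x l) else 1) from funext fun x => (e1 (fun l => f (x l)) fun l => g (x l)).symm,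
    key, ← e1 (fun _ => ∫ x, f x ∂ν n) (fun _ => ∫ x, g x ∂ν n)]
  refine Finset.prod_congr rfl fun l _ => ?_
  split_ifs <;> simp

/-- Integration of a pointwise bound on the box, the form in which every moment recursion is
derived. -/
lemma integral_step_le (h : HierSeq a b F ν) (n : ℕ) {f : ℝ → ℝ} (hf : Continuous f)
    {g : (Fin k → ℝ) → ℝ} (hg : Continuous g)
    (hle : ∀ x : Fin k → ℝ, (∀ i, x i ∈ Set.Icc a b) → f (F x) ≤ g x) :
    ∫ x, f x ∂ν (n + 1) ≤ ∫ x, g x ∂(Measure.pi fun _ : Fin k => ν n) := by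
  rw [h.integral_step n hf]
  refine integral_mono_ae (h.integrable_pi n (hf.comp h.cont)) (h.integrable_pi n hg) ?_
  filter_upwards [h.ae_box n] with x hx using hle x hx

lemma integral_sum_eval (h : HierSeq a b F ν) (n : ℕ) {f : ℝ → ℝ} (hf : Continuous f)
    (β : Fin k → ℝ) :
    ∫ x, ∑ i, β i * f (x i) ∂(Measure.pi fun _ : Fin k => ν n)
      = (∑ i, β i) * ∫ x, f x ∂ν n := by
  rw [integral_finsetSum]
  · simp_rw [integral_const_mul, h.integral_eval n hf, Finset.sum_mul]
  · intro i _
    exact h.integrable_pi n (by fun_prop)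

lemma integral_sum_offDiag (h : HierSeq a b F ν) (n : ℕ) {f g : ℝ → ℝ} (hf : Continuous f)
    (hg : Continuous g) :
    ∫ x, ∑ i, ∑ j, (if i = j then 0 else f (x i) * g (x j)) ∂(Measure.pi fun _ : Fin k => ν n)
      = (∑ i : Fin k, ∑ j : Fin k, if i = j then (0 : ℝ) else 1) *
        ((∫ x, f x ∂ν n) * ∫ x, g x ∂ν n) := by
  have hc : ∀ i j : Fin k, Continuous fun x : Fin k → ℝ =>
      (if i = j then (0 : ℝ) else f (x i) * g (x j)) := by
    intro i j
    split_ifs <;> fun_prop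
  rw [integral_finsetSum]
  · rw [Finset.sum_mul]
    refine Finset.sum_congr rfl fun i _ => ?_
    rw [integral_finsetSum]
    · rw [Finset.sum_mul]
      refine Finset.sum_congr rfl fun j _ => ?_
      split_ifs with hij
      · simp
      · rw [h.integral_eval_mul n f g hij, one_mul]
    · exact fun j _ => h.integrable_pi n (hc i j)
  · exact fun i _ => h.integrable_pi n (continuous_finsetSum _ fun j _ => hc i j)

end HierSeq

/-! ### Geometric recursions and decay of potentials -/

/-- A perturbed geometric recursion has the geometric rate of its perturbation, as soon as that
rate `τ` strictly exceeds the contraction factor `θ`. -/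
lemma geometric_of_recursion {u : ℕ → ℝ} {θ τ C : ℝ} {N : ℕ} (hθ : 0 ≤ θ) (hθτ : θ < τ)
    (h : ∀ n, N ≤ n → u (n + 1) ≤ θ * u n + C * τ ^ n) :
    ∃ C', 0 ≤ C' ∧ ∀ n, u n ≤ C' * τ ^ n := by
  have hτ : 0 < τ := lt_of_le_of_lt hθ hθτ
  refine ⟨(∑ m ∈ Finset.range (N + 1), |u m| / τ ^ m) + |C| / (τ - θ), ?_, ?_⟩
  · have : 0 < τ - θ := by linarith
    positivity
  set S := ∑ m ∈ Finset.range (N + 1), |u m| / τ ^ m with hS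
  have hgap : 0 < τ - θ := by linarith
  intro n
  rcases le_or_gt n N with hn | hn
  · have h1 : |u n| / τ ^ n ≤ S :=
      Finset.single_le_sum (f := fun m => |u m| / τ ^ m) (fun m _ => by positivity)
        (Finset.mem_range.2 (by omega))
    have h2 : u n ≤ S * τ ^ n := (le_abs_self _).trans ((div_le_iff₀ (by positivity)).1 h1)
    have h3 : 0 ≤ |C| / (τ - θ) * τ ^ n := by positivity
    linarith
  · induction n, hn.le using Nat.le_induction with
    | base => omega
    | succ n hn' ih =>
      have ihn : u n ≤ (S + |C| / (τ - θ)) * τ ^ n := by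
        rcases hn'.eq_or_lt with rfl | hlt
        · have h1 : |u N| / τ ^ N ≤ S :=
            Finset.single_le_sum (f := fun m => |u m| / τ ^ m) (fun m _ => by positivity)
              (Finset.mem_range.2 (by omega))
          have h2 : u N ≤ S * τ ^ N := (le_abs_self _).trans ((div_le_iff₀ (by positivity)).1 h1)
          have h3 : 0 ≤ |C| / (τ - θ) * τ ^ N := by positivity
          linarith
        · exact ih hlt
      have hS0 : 0 ≤ S := by positivity
      have e1 : |C| / (τ - θ) * (τ - θ) = |C| := by field_simp
      have h4 : θ * u n ≤ θ * ((S + |C| / (τ - θ)) * τ ^ n) := mul_le_mul_of_nonneg_left ihn hθ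
      have h5 : C * τ ^ n ≤ |C| * τ ^ n :=
        mul_le_mul_of_nonneg_right (le_abs_self C) (by positivity)
      have h6 : 0 ≤ S * (τ - θ) * τ ^ n := by positivity
      calc u (n + 1) ≤ θ * u n + C * τ ^ n := h n hn'
        _ ≤ θ * ((S + |C| / (τ - θ)) * τ ^ n) + |C| / (τ - θ) * (τ - θ) * τ ^ n := by
          rw [e1]; linarith
        _ ≤ (S + |C| / (τ - θ)) * τ ^ (n + 1) := by rw [pow_succ]; linarith

namespace HierSeq

variable {a b : ℝ} {k : ℕ} {F : (Fin k → ℝ) → ℝ} {ν : ℕ → Measure ℝ}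

/-- If the potential `w` never exceeds its maximum over the inputs, and contracts by `ρ < 1` when
at most one input has positive potential, then some moment of `w` decays at any prescribed
geometric rate. The `k` inputs contribute a factor `k`, which a large exponent `P` absorbs into
`ρ ^ P`; two inputs of positive potential occur together at the cost of a vanishing extra factor,
the integral of the weight `ψ`, which is at least `1` where `w` does not vanish. -/
lemma potential_decay (h : HierSeq a b F ν) {w ψ : ℝ → ℝ} (hw : Continuous w) (hψ : Continuous ψ)
    (hw0 : ∀ x, 0 ≤ w x) (hψ0 : ∀ x, 0 ≤ ψ x) (hwψ : ∀ x, w x ≠ 0 → 1 ≤ ψ x)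
    (hlim : Tendsto (fun n => ∫ x, ψ x ∂ν n) atTop (nhds 0)) {ρ : ℝ} (hρ0 : 0 ≤ ρ) (hρ : ρ < 1)
    (hmax : ∀ x : Fin k → ℝ, (∀ i, x i ∈ Set.Icc a b) → ∃ i, w (F x) ≤ w (x i))
    (hone : ∀ x : Fin k → ℝ, (∀ i, x i ∈ Set.Icc a b) → ∀ i, (∀ j, j ≠ i → w (x j) = 0) →
      w (F x) ≤ ρ * w (x i)) {s : ℝ} (hs : 0 < s) :
    ∃ P C, 1 ≤ P ∧ ∀ n, ∫ x, w x ^ P ∂ν n ≤ C * s ^ n := by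
  obtain ⟨P, hP1, hP⟩ : ∃ P : ℕ, 1 ≤ P ∧ (k : ℝ) * ρ ^ P < s / 2 := by
    have h1 : Tendsto (fun P : ℕ => (k : ℝ) * ρ ^ P) atTop (nhds (k * 0)) :=
      (tendsto_pow_atTop_nhds_zero_of_lt_one hρ0 hρ).const_mul _
    rw [mul_zero] at h1
    obtain ⟨P, hP⟩ := ((h1.eventually_lt_const (half_pos hs)).and (eventually_ge_atTop 1)).exists
    exact ⟨P, hP.2, hP.1⟩
  set K : ℝ := ∑ i : Fin k, ∑ j : Fin k, if i = j then (0 : ℝ) else 1 with hK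
  have hK0 : 0 ≤ K := Finset.sum_nonneg fun i _ => Finset.sum_nonneg fun j _ => by
    split_ifs <;> norm_num
  obtain ⟨N, hN⟩ : ∃ N, ∀ n, N ≤ n → K * ∫ x, ψ x ∂ν n < s / 4 := by
    have h1 := hlim.const_mul K
    rw [mul_zero] at h1
    exact eventually_atTop.1 (h1.eventually_lt_const (by positivity))
  have hrec : ∀ n, N ≤ n → ∫ x, w x ^ P ∂ν (n + 1) ≤ (s * (3 / 4)) * ∫ x, w x ^ P ∂ν n
      + 0 * s ^ n := by
    intro n hn
    have hA : 0 ≤ ∫ x, w x ^ P ∂ν n := integral_nonneg fun x => pow_nonneg (hw0 x) _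
    have hcont : ∀ i j : Fin k, Continuous fun x : Fin k → ℝ =>
        (if i = j then (0 : ℝ) else w (x i) ^ P * ψ (x j)) := by
      intro i j
      split_ifs <;> fun_prop
    have hcont2 : Continuous fun x : Fin k → ℝ =>
        ∑ i, ∑ j, (if i = j then (0 : ℝ) else w (x i) ^ P * ψ (x j)) :=
      continuous_finsetSum _ fun i _ => continuous_finsetSum _ fun j _ => hcont i j
    have hb := h.integral_step_le n (f := fun x => w x ^ P) (by fun_prop)
      (g := fun x => (∑ i, ρ ^ P * w (x i) ^ P)
        + ∑ i, ∑ j, (if i = j then 0 else w (x i) ^ P * ψ (x j))) (by fun_prop) ?_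
    · rw [integral_add (h.integrable_pi n (by fun_prop)) (h.integrable_pi n hcont2),
        h.integral_sum_eval n (f := fun x => w x ^ P) (by fun_prop) (fun _ => ρ ^ P),
        h.integral_sum_offDiag n (f := fun x => w x ^ P) (by fun_prop) hψ] at hb
      rw [← hK, Finset.sum_const, Finset.card_univ, Fintype.card_fin, nsmul_eq_mul] at hb
      have h2 : (k : ℝ) * ρ ^ P * ∫ x, w x ^ P ∂ν n ≤ s / 2 * ∫ x, w x ^ P ∂ν n :=
        mul_le_mul_of_nonneg_right hP.le hA
      have h3 : (K * ∫ x, ψ x ∂ν n) * ∫ x, w x ^ P ∂ν n ≤ s / 4 * ∫ x, w x ^ P ∂ν n :=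
        mul_le_mul_of_nonneg_right (hN n hn).le hA
      linarith
    · intro x hx
      have hn1 : ∀ i, 0 ≤ ρ ^ P * w (x i) ^ P := fun i =>
        mul_nonneg (pow_nonneg hρ0 _) (pow_nonneg (hw0 _) _)
      have hn2 : ∀ i j, 0 ≤ (if i = j then (0 : ℝ) else w (x i) ^ P * ψ (x j)) := by
        intro i j
        split_ifs
        · exact le_rfl
        · exact mul_nonneg (pow_nonneg (hw0 _) _) (hψ0 _)
      obtain ⟨i, hi⟩ := hmax x hx
      -- Either input `i` alone has positive potential and contracts, or a second input `j` supplies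
      -- a factor `ψ (x j) ≥ 1`.
      by_cases hj : ∀ j, j ≠ i → w (x j) = 0
      · have h1 : w (F x) ^ P ≤ ρ ^ P * w (x i) ^ P := by
          rw [← mul_pow]
          exact pow_le_pow_left₀ (hw0 _) (hone x hx i hj) P
        have h2 := Finset.single_le_sum (f := fun i => ρ ^ P * w (x i) ^ P) (fun i _ => hn1 i)
          (Finset.mem_univ i)
        have h3 : 0 ≤ ∑ i, ∑ j, (if i = j then (0 : ℝ) else w (x i) ^ P * ψ (x j)) :=
          Finset.sum_nonneg fun i _ => Finset.sum_nonneg fun j _ => hn2 i j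
        linarith
      · push Not at hj
        obtain ⟨j, hji, hj⟩ := hj
        have h1 : w (F x) ^ P ≤ w (x i) ^ P * ψ (x j) := by
          calc w (F x) ^ P ≤ w (x i) ^ P := pow_le_pow_left₀ (hw0 _) hi P
            _ ≤ w (x i) ^ P * ψ (x j) :=
              le_mul_of_one_le_right (pow_nonneg (hw0 _) _) (hwψ _ hj)
        have h2 := Finset.single_le_sum (f := fun j => if i = j then (0 : ℝ) else
          w (x i) ^ P * ψ (x j)) (fun j _ => hn2 i j) (Finset.mem_univ j)
        have h3 := Finset.single_le_sum (f := fun i => ∑ j, if i = j then (0 : ℝ) else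
          w (x i) ^ P * ψ (x j)) (fun i _ => Finset.sum_nonneg fun j _ => hn2 i j)
          (Finset.mem_univ i)
        have h4 : 0 ≤ ∑ i, ρ ^ P * w (x i) ^ P := Finset.sum_nonneg fun i _ => hn1 i
        simp only [if_neg hji.symm] at h2 h3 ⊢
        linarith
  obtain ⟨C, -, hC⟩ := geometric_of_recursion (u := fun n => ∫ x, w x ^ P ∂ν n)
    (by positivity) (by linarith : s * (3 / 4) < s) hrec
  exact ⟨P, C, hP1, hC⟩

/-- The mean of the law `ν n`. -/
noncomputable def mean (ν : ℕ → Measure ℝ) (n : ℕ) : ℝ := ∫ x, x ∂ν n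

lemma mean_mem (h : HierSeq a b F ν) (n : ℕ) : mean ν n ∈ Set.Icc a b := by
  have := h.prob
  constructor
  · have := integral_mono_ae (integrable_const a) (h.integrable n continuous_id)
      ((h.supp n).mono fun x hx => hx.1)
    simpa [mean] using this
  · have := integral_mono_ae (h.integrable n continuous_id) (integrable_const b)
      ((h.supp n).mono fun x hx => hx.2)
    simpa [mean] using this

lemma integral_sub_mean (h : HierSeq a b F ν) (n : ℕ) : ∫ x, (x - mean ν n) ∂ν n = 0 := by
  have := h.prob
  rw [integral_sub (h.integrable n (f := fun x => x) continuous_id) (integrable_const _)]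
  simp [mean]

/-- The mean minimises the quadratic deviation. -/
lemma integral_sq_sub_mean_le (h : HierSeq a b F ν) (n : ℕ) (t : ℝ) :
    ∫ x, |x - mean ν n| ^ 2 ∂ν n ≤ ∫ x, |x - t| ^ 2 ∂ν n := by
  have := h.prob
  have e : ∀ x, |x - t| ^ 2 = |x - mean ν n| ^ 2 + (2 * (mean ν n - t) * (x - mean ν n)
      + (mean ν n - t) ^ 2) := by
    intro x; rw [sq_abs, sq_abs]; ring
  simp_rw [e]
  rw [integral_add (h.integrable n (by fun_prop)) (h.integrable n (by fun_prop)),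
    integral_add (h.integrable n (by fun_prop)) (h.integrable n (by fun_prop)),
    integral_const_mul, h.integral_sub_mean]
  simp only [mul_zero, integral_const, probReal_univ, smul_eq_mul, one_mul, zero_add]
  nlinarith [sq_nonneg (mean ν n - t)]

/-- By independence and centring, the variance of a linear form is the sum of its squared
coefficients times the variance of the factors. -/
lemma integral_sq_linear (h : HierSeq a b F ν) (n : ℕ) (α : Fin k → ℝ) :
    ∫ x, (∑ i, α i * (x i - mean ν n)) ^ 2 ∂(Measure.pi fun _ : Fin k => ν n)
      = (∑ i, α i ^ 2) * ∫ x, |x - mean ν n| ^ 2 ∂ν n := by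
  simp_rw [sq (∑ i, α i * _), Finset.sum_mul_sum]
  rw [integral_finsetSum _ fun i _ => h.integrable_pi n (by fun_prop), Finset.sum_mul]
  refine Finset.sum_congr rfl fun i _ => ?_
  rw [integral_finsetSum _ fun j _ => h.integrable_pi n (by fun_prop)]
  rw [Finset.sum_eq_single i]
  · have e : ∀ x : Fin k → ℝ, α i * (x i - mean ν n) * (α i * (x i - mean ν n))
        = α i ^ 2 * |x i - mean ν n| ^ 2 := by intro x; rw [sq_abs]; ring
    simp_rw [e, integral_const_mul]
    rw [h.integral_eval n (f := fun y => |y - mean ν n| ^ 2) (by fun_prop)]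
  · intro j _ hj
    rw [h.integral_eval_mul n (fun y => α i * (y - mean ν n)) (fun y => α j * (y - mean ν n))
      hj.symm, integral_const_mul, h.integral_sub_mean]
    simp
  · simp

end HierSeq

/-! ### Even moments of the deviation from the mean -/

namespace HierSeq

variable {a b : ℝ} {k : ℕ} {F : (Fin k → ℝ) → ℝ} {ν : ℕ → Measure ℝ}

/-- Up to an error of arbitrarily small slope, `F` is affine with gradient `α` around the diagonal
point of the current mean, except where some coordinate lies in a bad set whose mass decays at an
arbitrarily fast geometric rate. The bad set is encoded by a continuous weight `D ≥ 0`, as the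
points with `D ≥ 1`, and its mass by the integral of `D`. -/
def NearLinear (a b : ℝ) {k : ℕ} (F : (Fin k → ℝ) → ℝ) (ν : ℕ → Measure ℝ) (α : Fin k → ℝ) :
    Prop :=
  ∀ e : ℝ, 0 < e → ∀ s : ℝ, 0 < s → ∃ (D : ℝ → ℝ) (C : ℝ) (N : ℕ), Continuous D ∧
    (∀ x, 0 ≤ D x) ∧ (∀ n, ∫ x, D x ∂ν n ≤ C * s ^ n) ∧
    ∀ n, N ≤ n → ∀ x : Fin k → ℝ, (∀ i, x i ∈ Set.Icc a b) →
      |F x - F (fun _ => mean ν n) - ∑ i, α i * (x i - mean ν n)|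
        ≤ e * ∑ i, |x i - mean ν n| ∨ ∃ i, 1 ≤ D (x i)

/-- The variance recursion: the linear part contributes `∑ α i ^ 2` exactly, the rest an
arbitrarily small multiple of the variance and a fast decaying term. -/
lemma second_moment (h : HierSeq a b F ν) {α : Fin k → ℝ} (H : NearLinear a b F ν α) {τ : ℝ}
    (hτ : 0 < τ) (hα : ∑ i, α i ^ 2 < τ ^ 2) :
    ∃ C, 0 ≤ C ∧ ∀ n, ∫ x, |x - mean ν n| ^ 2 ∂ν n ≤ C * (τ ^ 2) ^ n := by
  set l := ∑ i, α i ^ 2 with hl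
  have hl0 : 0 ≤ l := Finset.sum_nonneg fun i _ => sq_nonneg _
  set g := τ ^ 2 - l with hg
  have hg0 : 0 < g := by linarith
  -- Of the available gap `g`, a quarter is spent on the linear part and a quarter on the error.
  set η := g / (4 * (l + 1)) with hη
  have hη0 : 0 < η := by positivity
  have hηl : η * l ≤ g / 4 := by
    rw [hη, div_mul_eq_mul_div, div_le_div_iff₀ (by positivity) (by norm_num)]
    nlinarith
  set e := Real.sqrt (g / 4 / ((1 + 1 / η) * (k ^ 2 + 1))) with he
  have he0 : 0 < e := Real.sqrt_pos.2 (by positivity)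
  have hesq : (1 + 1 / η) * (e ^ 2 * k) * k ≤ g / 4 := by
    have h1 : e ^ 2 = g / 4 / ((1 + 1 / η) * (k ^ 2 + 1)) := Real.sq_sqrt (by positivity)
    have h2 : (1 + 1 / η) * (k ^ 2 + 1) * e ^ 2 = g / 4 := by rw [h1]; field_simp
    have h3 : 0 ≤ (1 + 1 / η) * e ^ 2 := by positivity
    nlinarith
  obtain ⟨D, C, N, hD, hD0, hDs, hnear⟩ := H e he0 (τ ^ 2) (by positivity)
  have hrec : ∀ n, N ≤ n → ∫ x, |x - mean ν (n + 1)| ^ 2 ∂ν (n + 1)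
      ≤ (l + g / 2) * ∫ x, |x - mean ν n| ^ 2 ∂ν n + ((b - a) ^ 2 * k * C) * (τ ^ 2) ^ n := by
    intro n hn
    set m := mean ν n with hm
    have hmm : m ∈ Set.Icc a b := h.mean_mem n
    have hA : 0 ≤ ∫ x, |x - m| ^ 2 ∂ν n := integral_nonneg fun x => by positivity
    have hb := h.integral_step_le n (f := fun x => |x - F (fun _ => m)| ^ 2) (by fun_prop)
      (g := fun x => (1 + η) * (∑ i, α i * (x i - m)) ^ 2
        + (∑ i, ((1 + 1 / η) * (e ^ 2 * k)) * |x i - m| ^ 2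
          + ∑ i, (b - a) ^ 2 * D (x i))) (by fun_prop) ?_
    · rw [integral_add (h.integrable_pi n (by fun_prop)) (h.integrable_pi n (by fun_prop)),
        integral_add (h.integrable_pi n (by fun_prop)) (h.integrable_pi n (by fun_prop)),
        integral_const_mul, h.integral_sq_linear n,
        h.integral_sum_eval n (f := fun x => |x - m| ^ 2) (by fun_prop)
          (fun _ => (1 + 1 / η) * (e ^ 2 * k)),
        h.integral_sum_eval n hD (fun _ => (b - a) ^ 2)] at hb
      simp only [Finset.sum_const, Finset.card_univ, Fintype.card_fin, nsmul_eq_mul] at hb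
      have h1 := h.integral_sq_sub_mean_le (n + 1) (F fun _ => m)
      have h2 : (k * (b - a) ^ 2) * ∫ x, D x ∂ν n ≤ (k * (b - a) ^ 2) * (C * (τ ^ 2) ^ n) :=
        mul_le_mul_of_nonneg_left (hDs n) (by positivity)
      have h3 : ((1 + η) * l + k * ((1 + 1 / η) * (e ^ 2 * k))) * ∫ x, |x - m| ^ 2 ∂ν n
          ≤ (l + g / 2) * ∫ x, |x - m| ^ 2 ∂ν n :=
        mul_le_mul_of_nonneg_right (by linarith) hA
      linarith
    · intro x hx
      have hS1 : 0 ≤ ∑ i, ((1 + 1 / η) * (e ^ 2 * k)) * |x i - m| ^ 2 :=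
        Finset.sum_nonneg fun i _ => by positivity
      have hS2 : ∀ i, 0 ≤ (b - a) ^ 2 * D (x i) := fun i => mul_nonneg (sq_nonneg _) (hD0 _)
      rcases hnear n hn x hx with hx1 | ⟨i, hi⟩
      · set A := ∑ i, α i * (x i - m)
        set B := F x - F (fun _ => m) - A with hB
        have h1 : F x - F (fun _ => m) = A + B := by rw [hB]; ring
        have h2 : B ^ 2 ≤ e ^ 2 * (k * ∑ i, |x i - m| ^ 2) := by
          calc B ^ 2 ≤ (e * ∑ i, |x i - m|) ^ 2 := sq_le_sq' (abs_le.1 hx1).1 (abs_le.1 hx1).2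
            _ = e ^ 2 * (∑ i, |x i - m|) ^ 2 := by ring
            _ ≤ _ := by
              refine mul_le_mul_of_nonneg_left ?_ (sq_nonneg _)
              simpa using sq_sum_le_card_mul_sum_sq (s := Finset.univ) (f := fun i => |x i - m|)
        have h3 : (A + B) ^ 2 ≤ (1 + η) * A ^ 2 + (1 + 1 / η) * B ^ 2 := by
          have : (1 + η) * A ^ 2 + (1 + 1 / η) * B ^ 2 - (A + B) ^ 2
              = (η * A - B) ^ 2 / η := by field_simp; ring
          have : 0 ≤ (η * A - B) ^ 2 / η := by positivity
          linarith
        have h4 : (1 + 1 / η) * B ^ 2 ≤ (1 + 1 / η) * (e ^ 2 * (k * ∑ i, |x i - m| ^ 2)) :=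
          mul_le_mul_of_nonneg_left h2 (by positivity)
        have h5 := Finset.sum_nonneg fun i (_ : i ∈ Finset.univ) => hS2 i
        simp only [sq_abs (F x - _)]
        rw [h1, ← Finset.mul_sum]
        linarith
      · have h1 : |F x - F (fun _ => m)| ^ 2 ≤ (b - a) ^ 2 := by
          refine pow_le_pow_left₀ (abs_nonneg _) ?_ 2
          have := h.maps x hx
          have := h.maps (fun _ => m) fun _ => hmm
          simp only [Set.mem_Icc] at *
          rw [abs_le]; constructor <;> linarith
        have h2 := Finset.single_le_sum (f := fun i => (b - a) ^ 2 * D (x i)) (fun i _ => hS2 i)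
          (Finset.mem_univ i)
        have h3 : (b - a) ^ 2 ≤ (b - a) ^ 2 * D (x i) := le_mul_of_one_le_right (sq_nonneg _) hi
        have h4 : 0 ≤ (1 + η) * (∑ i, α i * (x i - m)) ^ 2 := by positivity
        linarith
  exact geometric_of_recursion (u := fun n => ∫ x, |x - mean ν n| ^ 2 ∂ν n) (by positivity)
    (by linarith) hrec

/-- Gap for the leading coefficient of the recursion for moments of even order `2 * q`. -/
lemma exists_slack {α : Fin k → ℝ} {τ : ℝ} (hα : ∑ i, α i ^ 2 < τ ^ 2) {q : ℕ}
    (hq : 1 ≤ q) : ∃ e, 0 < e ∧ ∑ i, (|α i| + 2 * e) ^ (2 * q) < τ ^ (2 * q) := by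
  have h0 : ∑ i, |α i| ^ (2 * q) < τ ^ (2 * q) := by
    have h1 : ∑ i, |α i| ^ (2 * q) ≤ (∑ i, α i ^ 2) ^ q := by
      have h2 : ∀ i, α i ^ 2 ≤ ∑ i, α i ^ 2 := fun i =>
        Finset.single_le_sum (f := fun i => α i ^ 2) (fun i _ => sq_nonneg _) (Finset.mem_univ i)
      obtain ⟨r, rfl⟩ : ∃ r, q = r + 1 := ⟨q - 1, by omega⟩
      rw [pow_succ (∑ i, α i ^ 2), Finset.mul_sum]
      refine Finset.sum_le_sum fun i _ => ?_
      rw [pow_mul, sq_abs, pow_succ]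
      exact mul_le_mul_of_nonneg_right (pow_le_pow_left₀ (sq_nonneg _) (h2 i) r) (sq_nonneg _)
    refine h1.trans_lt ?_
    rw [pow_mul]
    exact pow_lt_pow_left₀ hα (Finset.sum_nonneg fun i _ => sq_nonneg _) (by omega)
  have hc : Continuous fun e : ℝ => ∑ i, (|α i| + 2 * e) ^ (2 * q) := by fun_prop
  have ht : Tendsto (fun e : ℝ => ∑ i, (|α i| + 2 * e) ^ (2 * q)) (nhdsWithin 0 (Set.Ioi 0))
      (nhds (∑ i, |α i| ^ (2 * q))) := by
    have := (hc.tendsto 0).mono_left (nhdsWithin_le_nhds (s := Set.Ioi 0))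
    simpa using this
  obtain ⟨e, he1, he2⟩ := ((ht.eventually_lt_const h0).and self_mem_nhdsWithin).exists
  exact ⟨e, he2, he1⟩

set_option maxHeartbeats 1000000 in
/-- Moments of order `2 * q` are controlled by moments of order `q`. Where one deviation dominates
all others, `F` shrinks it by its own coefficient `|α i|`, up to a small error; where two
deviations are comparable, the power `2 * q` of the larger splits into a product of two independent
factors of order `q`. -/
lemma moment_double (h : HierSeq a b F ν) {α : Fin k → ℝ} (H : NearLinear a b F ν α)
    {τ : ℝ} (hτ : 0 < τ) (hα : ∑ i, α i ^ 2 < τ ^ 2) (hk : 0 < k)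
    (hw : ∃ C, ∀ n, |mean ν (n + 1) - F (fun _ => mean ν n)| ≤ C * τ ^ n) {q : ℕ} (hq : 1 ≤ q)
    (hA : ∃ C, 0 ≤ C ∧ ∀ n, ∫ x, |x - mean ν n| ^ q ∂ν n ≤ C * (τ ^ q) ^ n) :
    ∃ C, 0 ≤ C ∧ ∀ n, ∫ x, |x - mean ν n| ^ (2 * q) ∂ν n ≤ C * (τ ^ (2 * q)) ^ n := by
  obtain ⟨Cw, hCw⟩ := hw
  obtain ⟨Cq, hCq0, hCq⟩ := hA
  obtain ⟨e, he0, he⟩ := exists_slack hα hq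
  obtain ⟨D, C, N, hD, hD0, hDs, hnear⟩ := H e he0 (τ ^ (2 * q)) (by positivity)
  -- `η` is the threshold, relative to the largest deviation, above which a second deviation or the
  -- drift of the mean counts as comparable.
  set L : ℝ := ∑ i, (|α i| + e) with hL
  have hL0 : 0 ≤ L := Finset.sum_nonneg fun i _ => by positivity
  set η : ℝ := e / (L + 1) with hη
  have hη0 : 0 < η := by positivity
  have hηe : L * η + η = e := by rw [hη]; field_simp
  set K : ℝ := ∑ i : Fin k, ∑ j : Fin k, if i = j then (0 : ℝ) else 1 with hK
  have hK0 : 0 ≤ K := Finset.sum_nonneg fun i _ => Finset.sum_nonneg fun j _ => by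
    split_ifs <;> norm_num
  set B1 : ℝ := (L / η + 1) ^ (2 * q) with hB1
  set B2 : ℝ := (L + η) ^ (2 * q) / η ^ q with hB2
  set B3 : ℝ := (b - a) ^ (2 * q) with hB3
  have hB3' : 0 ≤ B3 := by rw [hB3, pow_mul]; positivity
  have hrec : ∀ n, N ≤ n → ∫ x, |x - mean ν (n + 1)| ^ (2 * q) ∂ν (n + 1)
      ≤ (∑ i, (|α i| + 2 * e) ^ (2 * q)) * ∫ x, |x - mean ν n| ^ (2 * q) ∂ν n
        + (B1 * Cw ^ (2 * q) + B2 * K * (Cq * Cq) + k * B3 * C) * (τ ^ (2 * q)) ^ n := by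
    intro n hn
    set m := mean ν n with hm
    set m' := mean ν (n + 1) with hm'
    have hmm : m ∈ Set.Icc a b := h.mean_mem n
    have hmm' : m' ∈ Set.Icc a b := h.mean_mem (n + 1)
    set w := |m' - F (fun _ => m)| with hw
    have hw0 : 0 ≤ w := abs_nonneg _
    have hcont : Continuous fun x : Fin k → ℝ => ∑ i, ∑ j,
        (if i = j then (0 : ℝ) else |x i - m| ^ q * |x j - m| ^ q) := by
      refine continuous_finsetSum _ fun i _ => continuous_finsetSum _ fun j _ => ?_
      split_ifs <;> fun_prop
    have hprob := h.prob
    have hb := h.integral_step_le n (f := fun x => |x - m'| ^ (2 * q)) (by fun_prop)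
      (g := fun x => ∑ i, (|α i| + 2 * e) ^ (2 * q) * |x i - m| ^ (2 * q)
        + (B1 * w ^ (2 * q) + (B2 * (∑ i, ∑ j,
          (if i = j then (0 : ℝ) else |x i - m| ^ q * |x j - m| ^ q))
          + ∑ i, B3 * D (x i)))) (by fun_prop) ?_
    · rw [integral_add (h.integrable_pi n (by fun_prop)) (h.integrable_pi n (by fun_prop)),
        integral_add (h.integrable_pi n (by fun_prop)) (h.integrable_pi n (by fun_prop)),
        integral_add (h.integrable_pi n (by fun_prop)) (h.integrable_pi n (by fun_prop)),
        integral_const_mul,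
        h.integral_sum_eval n (f := fun x => |x - m| ^ (2 * q)) (by fun_prop)
          (fun i => (|α i| + 2 * e) ^ (2 * q)),
        integral_const_mul,
        h.integral_sum_offDiag n (f := fun x => |x - m| ^ q) (g := fun x => |x - m| ^ q)
          (by fun_prop) (by fun_prop),
        h.integral_sum_eval n hD (fun _ => B3), ← hK] at hb
      simp only [Finset.sum_const, Finset.card_univ, Fintype.card_fin, nsmul_eq_mul,
        integral_const, probReal_univ, smul_eq_mul, one_mul] at hb
      have hT : (0 : ℝ) ≤ (τ ^ (2 * q)) ^ n := by positivity
      have h1 : w ^ (2 * q) ≤ Cw ^ (2 * q) * (τ ^ (2 * q)) ^ n := by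
        calc w ^ (2 * q) ≤ (Cw * τ ^ n) ^ (2 * q) := pow_le_pow_left₀ hw0 (hCw n) _
          _ = _ := by rw [mul_pow, ← pow_mul, ← pow_mul, mul_comm n]
      have h2 : (∫ x, |x - m| ^ q ∂ν n) * ∫ x, |x - m| ^ q ∂ν n
          ≤ (Cq * Cq) * (τ ^ (2 * q)) ^ n := by
        calc _ ≤ (Cq * (τ ^ q) ^ n) * (Cq * (τ ^ q) ^ n) :=
              mul_le_mul (hCq n) (hCq n) (integral_nonneg fun x => by positivity) (by positivity)
          _ = _ := by rw [← pow_mul, ← pow_mul]; ring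
      have h3 : B1 * w ^ (2 * q) ≤ B1 * (Cw ^ (2 * q) * (τ ^ (2 * q)) ^ n) :=
        mul_le_mul_of_nonneg_left h1 (by positivity)
      have h4 : B2 * (K * ((∫ x, |x - m| ^ q ∂ν n) * ∫ x, |x - m| ^ q ∂ν n))
          ≤ B2 * (K * ((Cq * Cq) * (τ ^ (2 * q)) ^ n)) :=
        mul_le_mul_of_nonneg_left (mul_le_mul_of_nonneg_left h2 hK0) (by positivity)
      have h5 : k * B3 * ∫ x, D x ∂ν n ≤ k * B3 * (C * (τ ^ (2 * q)) ^ n) :=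
        mul_le_mul_of_nonneg_left (hDs n) (by positivity)
      linarith
    · intro x hx
      have hn1 : ∀ i, 0 ≤ (|α i| + 2 * e) ^ (2 * q) * |x i - m| ^ (2 * q) :=
        fun i => by positivity
      have hn2 : ∀ i j, 0 ≤ (if i = j then (0 : ℝ) else |x i - m| ^ q * |x j - m| ^ q) := by
        intro i j
        split_ifs
        · exact le_rfl
        · positivity
      have hn3 : ∀ i, 0 ≤ B3 * D (x i) := fun i => mul_nonneg hB3' (hD0 _)
      have s1 := Finset.sum_nonneg fun i (_ : i ∈ Finset.univ) => hn1 i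
      have s2 : 0 ≤ B2 * ∑ i, ∑ j, (if i = j then (0 : ℝ) else |x i - m| ^ q * |x j - m| ^ q) :=
        mul_nonneg (by positivity)
          (Finset.sum_nonneg fun i _ => Finset.sum_nonneg fun j _ => hn2 i j)
      have s3 := Finset.sum_nonneg fun i (_ : i ∈ Finset.univ) => hn3 i
      have s4 : 0 ≤ B1 * w ^ (2 * q) := by positivity
      rcases hnear n hn x hx with hx1 | ⟨i, hi⟩
      · have hlip : |F x - m'| ≤ ∑ i, (|α i| + e) * |x i - m| + w := by
          have t1 : |∑ i, α i * (x i - m)| ≤ ∑ i, |α i| * |x i - m| := by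
            refine (Finset.abs_sum_le_sum_abs _ _).trans (le_of_eq ?_)
            simp [abs_mul]
          have t2 : F x - m' = (F x - F (fun _ => m) - ∑ i, α i * (x i - m))
              + (∑ i, α i * (x i - m)) + -(m' - F (fun _ => m)) := by ring
          have t3 : ∑ i, (|α i| + e) * |x i - m|
              = ∑ i, |α i| * |x i - m| + e * ∑ i, |x i - m| := by
            rw [Finset.mul_sum, ← Finset.sum_add_distrib]
            exact Finset.sum_congr rfl fun i _ => by ring
          rw [t2, t3]
          refine (abs_add_three _ _ _).trans ?_
          rw [abs_neg]
          linarith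
        obtain ⟨i, -, hi⟩ := Finset.exists_max_image Finset.univ (fun i => |x i - m|)
          ⟨⟨0, hk⟩, Finset.mem_univ _⟩
        have hsum : ∑ j, (|α j| + e) * |x j - m| ≤ L * |x i - m| := by
          rw [hL, Finset.sum_mul]
          exact Finset.sum_le_sum fun j hj =>
            mul_le_mul_of_nonneg_left (hi j hj) (by positivity)
        -- With `i` the largest deviation: it dominates everything (`t5`), another deviation is
        -- comparable, or the drift `w` of the mean is.
        by_cases hwη : w ≤ η * |x i - m|
        · by_cases hj : ∀ j, j ≠ i → |x j - m| ≤ η * |x i - m|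
          · have t1 : ∑ j, (|α j| + e) * |x j - m| ≤ (|α i| + e) * |x i - m|
                + L * (η * |x i - m|) := by
              rw [← Finset.add_sum_erase _ _ (Finset.mem_univ i)]
              have t2 : ∑ j ∈ Finset.univ.erase i, (|α j| + e) * |x j - m|
                  ≤ ∑ j ∈ Finset.univ.erase i, (|α j| + e) * (η * |x i - m|) :=
                Finset.sum_le_sum fun j hj' => mul_le_mul_of_nonneg_left
                  (hj j (Finset.ne_of_mem_erase hj')) (by positivity)
              have t3 : ∑ j ∈ Finset.univ.erase i, (|α j| + e) * (η * |x i - m|)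
                  ≤ L * (η * |x i - m|) := by
                rw [hL, Finset.sum_mul]
                exact Finset.sum_le_sum_of_subset_of_nonneg (Finset.erase_subset _ _)
                  fun j _ _ => by positivity
              linarith
            have t4 : |F x - m'| ≤ (|α i| + 2 * e) * |x i - m| := by
              have : L * (η * |x i - m|) + η * |x i - m| = e * |x i - m| := by
                rw [← hηe]; ring
              linarith
            have t5 : |F x - m'| ^ (2 * q) ≤ (|α i| + 2 * e) ^ (2 * q) * |x i - m| ^ (2 * q) := by
              rw [← mul_pow]; exact pow_le_pow_left₀ (abs_nonneg _) t4 _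
            have t6 := Finset.single_le_sum (f := fun i => (|α i| + 2 * e) ^ (2 * q) *
              |x i - m| ^ (2 * q)) (fun i _ => hn1 i) (Finset.mem_univ i)
            linarith
          · push Not at hj
            obtain ⟨j, hji, hj⟩ := hj
            have t1 : |F x - m'| ≤ (L + η) * |x i - m| := by linarith
            have t2 : |F x - m'| ^ (2 * q) ≤ (L + η) ^ (2 * q) * |x i - m| ^ (2 * q) := by
              rw [← mul_pow]; exact pow_le_pow_left₀ (abs_nonneg _) t1 _
            have t3 : η ^ q * |x i - m| ^ q ≤ |x j - m| ^ q := by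
              rw [← mul_pow]; exact pow_le_pow_left₀ (by positivity) hj.le _
            have t4 : (L + η) ^ (2 * q) * |x i - m| ^ (2 * q)
                ≤ B2 * (|x i - m| ^ q * |x j - m| ^ q) := by
              have e1 : (L + η) ^ (2 * q) * |x i - m| ^ (2 * q)
                  = B2 * (|x i - m| ^ q * (η ^ q * |x i - m| ^ q)) := by
                rw [hB2, two_mul q, pow_add |x i - m|]; field_simp
              rw [e1]
              exact mul_le_mul_of_nonneg_left (mul_le_mul_of_nonneg_left t3 (by positivity))
                (by positivity)
            have t5 := Finset.single_le_sum (f := fun j => if i = j then (0 : ℝ) else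
              |x i - m| ^ q * |x j - m| ^ q) (fun j _ => hn2 i j) (Finset.mem_univ j)
            have t6 := Finset.single_le_sum (f := fun i => ∑ j, if i = j then (0 : ℝ) else
              |x i - m| ^ q * |x j - m| ^ q) (fun i _ => Finset.sum_nonneg fun j _ => hn2 i j)
              (Finset.mem_univ i)
            simp only [if_neg hji.symm] at t5 t6 ⊢
            have t7 := mul_le_mul_of_nonneg_left (t5.trans t6)
              (show 0 ≤ B2 by positivity)
            linarith
        · push Not at hwη
          have t1 : |x i - m| ≤ w / η := by
            rw [le_div_iff₀ hη0]; linarith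
          have t2 : |F x - m'| ≤ (L / η + 1) * w := by
            have : L * |x i - m| ≤ L * (w / η) := mul_le_mul_of_nonneg_left t1 hL0
            have e1 : L * (w / η) = L / η * w := by ring
            linarith
          have t3 : |F x - m'| ^ (2 * q) ≤ B1 * w ^ (2 * q) := by
            rw [hB1, ← mul_pow]; exact pow_le_pow_left₀ (abs_nonneg _) t2 _
          linarith
      · have t1 : |F x - m'| ^ (2 * q) ≤ B3 := by
          refine pow_le_pow_left₀ (abs_nonneg _) ?_ _
          have := h.maps x hx
          simp only [Set.mem_Icc] at *
          rw [abs_le]; constructor <;> linarith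
        have t2 := Finset.single_le_sum (f := fun i => B3 * D (x i)) (fun i _ => hn3 i)
          (Finset.mem_univ i)
        have t3 : B3 ≤ B3 * D (x i) := le_mul_of_one_le_right hB3' hi
        linarith
  exact geometric_of_recursion (u := fun n => ∫ x, |x - mean ν n| ^ (2 * q) ∂ν n)
    (Finset.sum_nonneg fun i _ => by positivity) he hrec

end HierSeq

/-! ### Real moments and the Taylor remainder -/

/-- Interpolation between exponents: a moment of natural order `Q` at scale `t` bounds every real
moment of smaller order at the same scale, since `|V| ^ p ≤ t ^ p + t ^ (p - Q) * |V| ^ Q`. -/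
lemma real_moment_of_nat {Ω : Type*} [MeasurableSpace Ω] {μ : Measure Ω} [IsProbabilityMeasure μ]
    {V : Ω → ℝ} {Q : ℕ} (hV : Integrable (fun x => |V x| ^ Q) μ) {C t p : ℝ} (ht : 0 < t)
    (hp : 0 < p) (hpQ : p ≤ Q) (hC : ∫ x, |V x| ^ Q ∂μ ≤ C * t ^ Q) :
    ∫ x, |V x| ^ p ∂μ ≤ (1 + C) * t ^ p := by
  have hle : ∀ x, |V x| ^ p ≤ t ^ p + t ^ (p - Q) * |V x| ^ Q := by
    intro x
    rcases le_or_gt |V x| t with h | h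
    · have h1 : |V x| ^ p ≤ t ^ p := Real.rpow_le_rpow (abs_nonneg _) h hp.le
      have h2 : 0 ≤ t ^ (p - Q) * |V x| ^ Q := by positivity
      linarith
    · have hv : 0 < |V x| := ht.trans h
      have h1 : |V x| ^ (p - Q) ≤ t ^ (p - Q) :=
        Real.rpow_le_rpow_of_nonpos ht h.le (by linarith)
      have h2 : |V x| ^ p = |V x| ^ (p - Q) * |V x| ^ Q := by
        rw [← Real.rpow_natCast |V x| Q, ← Real.rpow_add hv]; congr 1; ring
      have h3 : |V x| ^ (p - Q) * |V x| ^ Q ≤ t ^ (p - Q) * |V x| ^ Q :=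
        mul_le_mul_of_nonneg_right h1 (by positivity)
      have h4 : 0 ≤ t ^ p := by positivity
      linarith
  have h1 : ∫ x, |V x| ^ p ∂μ ≤ ∫ x, (t ^ p + t ^ (p - Q) * |V x| ^ Q) ∂μ :=
    integral_mono_of_nonneg (Eventually.of_forall fun x => by positivity)
      ((integrable_const _).add (hV.const_mul _)) (Eventually.of_forall hle)
  rw [integral_add (integrable_const _) (hV.const_mul _), integral_const_mul] at h1
  simp only [integral_const, probReal_univ, smul_eq_mul, one_mul] at h1
  have h2 : t ^ (p - Q) * ∫ x, |V x| ^ Q ∂μ ≤ t ^ (p - Q) * (C * t ^ Q) :=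
    mul_le_mul_of_nonneg_left hC (by positivity)
  have h3 : t ^ (p - Q) * t ^ Q = t ^ p := by
    rw [← Real.rpow_natCast t Q, ← Real.rpow_add ht]; congr 1; ring
  have h4 : t ^ (p - Q) * (C * t ^ Q) = C * t ^ p := by rw [← h3]; ring
  linarith

namespace HierSeq

variable {a b : ℝ} {k : ℕ} {F : (Fin k → ℝ) → ℝ} {ν : ℕ → Measure ℝ}

/-- The moment bounds, given the approximate linearity `NearLinear` and second order Taylor
expansions of `F` at the diagonal points of the means. -/
lemma moment_bounds (h : HierSeq a b F ν) (hk : 0 < k) {α : Fin k → ℝ} (H : NearLinear a b F ν α)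
    {τ : ℝ} (hτ : 0 < τ) (hτ1 : τ ≤ 1) (hα : ∑ i, α i ^ 2 < τ ^ 2) {M : ℝ} (hM : 0 ≤ M)
    {β : ℕ → Fin k → ℝ}
    (hT : ∀ n, ∀ x : Fin k → ℝ, (∀ i, x i ∈ Set.Icc a b) →
      |F x - F (fun _ => mean ν n) - ∑ i, β n i * (x i - mean ν n)|
        ≤ M * ∑ i, |x i - mean ν n| ^ 2) {p : ℝ} (hp : 1 ≤ p) :
    ∃ CZ CX : ℝ, 1 ≤ CZ ∧ 1 ≤ CX ∧ ∀ n : ℕ,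
      (∫ x, |(F x - ∑ i, β n i * x i) - ∫ y, (F y - ∑ i, β n i * y i)
          ∂(Measure.pi fun _ : Fin k => ν n)| ^ p ∂(Measure.pi fun _ : Fin k => ν n))
        ≤ CZ * (τ ^ (2 * n)) ^ p ∧
      (∫ x, |x - mean ν n| ^ p ∂ν n) ≤ CX * (τ ^ n) ^ p := by
  have hprob := h.prob
  have hFc := h.cont
  obtain ⟨C2, hC20, hC2⟩ := h.second_moment H hτ hα
  set R : ℕ → (Fin k → ℝ) → ℝ := fun n x =>
    F x - F (fun _ => mean ν n) - ∑ i, β n i * (x i - mean ν n) with hR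
  have hRc : ∀ n, Continuous (R n) := fun n => by rw [hR]; fun_prop
  have hlin : ∀ n, ∫ x, ∑ i, β n i * (x i - mean ν n) ∂(Measure.pi fun _ : Fin k => ν n) = 0 := by
    intro n
    rw [h.integral_sum_eval n (f := fun x => x - mean ν n) (by fun_prop), h.integral_sub_mean,
      mul_zero]
  have hER : ∀ n, |∫ x, R n x ∂(Measure.pi fun _ : Fin k => ν n)|
      ≤ M * k * C2 * (τ ^ (2 * n)) := by
    intro n
    calc |∫ x, R n x ∂(Measure.pi fun _ : Fin k => ν n)|
        ≤ ∫ x, |R n x| ∂(Measure.pi fun _ : Fin k => ν n) := abs_integral_le_integral_abs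
      _ ≤ ∫ x, ∑ i, M * |x i - mean ν n| ^ 2 ∂(Measure.pi fun _ : Fin k => ν n) := by
        refine integral_mono_ae (h.integrable_pi n (hRc n).abs) (h.integrable_pi n (by fun_prop)) ?_
        filter_upwards [h.ae_box n] with x hx
        rw [← Finset.mul_sum]
        exact hT n x hx
      _ = M * k * ∫ x, |x - mean ν n| ^ 2 ∂ν n := by
        rw [h.integral_sum_eval n (f := fun x => |x - mean ν n| ^ 2) (by fun_prop) fun _ => M]
        simp only [Finset.sum_const, Finset.card_univ, Fintype.card_fin, nsmul_eq_mul]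
        ring
      _ ≤ M * k * (C2 * (τ ^ 2) ^ n) := mul_le_mul_of_nonneg_left (hC2 n) (by positivity)
      _ = _ := by rw [← pow_mul]; ring
  have hmean : ∀ n, mean ν (n + 1) = F (fun _ => mean ν n)
      + ∫ x, R n x ∂(Measure.pi fun _ : Fin k => ν n) := by
    intro n
    have e1 : mean ν (n + 1) = ∫ x, F x ∂(Measure.pi fun _ : Fin k => ν n) :=
      h.integral_step n (f := fun x => x) continuous_id
    rw [e1, hR]
    simp only
    rw [integral_sub (h.integrable_pi n (by fun_prop)) (h.integrable_pi n (by fun_prop)),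
      integral_sub (h.integrable_pi n (by fun_prop)) (h.integrable_pi n (by fun_prop)), hlin]
    simp
  -- The drift of the mean is of second order, in particular of the first order rate `τ ^ n`.
  have hw : ∃ C, ∀ n, |mean ν (n + 1) - F (fun _ => mean ν n)| ≤ C * τ ^ n := by
    refine ⟨M * k * C2, fun n => ?_⟩
    rw [hmean, add_sub_cancel_left]
    refine (hER n).trans (mul_le_mul_of_nonneg_left ?_ (by positivity))
    exact pow_le_pow_of_le_one hτ.le hτ1 (by omega)
  have hmom : ∀ m : ℕ, ∃ C, 0 ≤ C ∧ ∀ n, ∫ x, |x - mean ν n| ^ (2 ^ (m + 1)) ∂ν n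
      ≤ C * (τ ^ (2 ^ (m + 1))) ^ n := by
    intro m
    induction m with
    | zero => exact ⟨C2, hC20, by simpa using hC2⟩
    | succ m ih =>
      have := h.moment_double H hτ hα hk hw (q := 2 ^ (m + 1)) Nat.one_le_two_pow ih
      rwa [← pow_succ'] at this
  -- The remainder is quadratic in the deviations, so its moment of order `Q` needs the moment of
  -- the deviations of order `2 * Q`, which is the next power of two.
  obtain ⟨m, hm⟩ : ∃ m : ℕ, p ≤ ((2 ^ (m + 1) : ℕ) : ℝ) := by
    obtain ⟨m, hm⟩ := exists_nat_ge p
    refine ⟨m, hm.trans ?_⟩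
    exact_mod_cast (Nat.lt_two_pow_self.le.trans (Nat.pow_le_pow_right (by norm_num) (by omega)))
  obtain ⟨C, hC0, hC⟩ := hmom m
  obtain ⟨C', hC0', hC'⟩ := hmom (m + 1)
  set Q := 2 ^ (m + 1) with hQ
  have hQQ : 2 ^ (m + 1 + 1) = 2 * Q := by rw [hQ, ← pow_succ']
  set B := 2 ^ (Q - 1) * ((M * k) ^ Q * k * C' + (M * k * C2) ^ Q) with hB
  refine ⟨1 + B, 1 + C, ?_, by linarith, fun n => ⟨?_, ?_⟩⟩
  · have : 0 ≤ B := by positivity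
    linarith
  · have e1 : ∀ x, (F x - ∑ i, β n i * x i) - ∫ y, (F y - ∑ i, β n i * y i)
          ∂(Measure.pi fun _ : Fin k => ν n)
        = R n x - ∫ y, R n y ∂(Measure.pi fun _ : Fin k => ν n) := by
      intro x
      obtain ⟨c₀, e2⟩ : ∃ c₀, ∀ x, F x - ∑ i, β n i * x i = R n x + c₀ := by
        refine ⟨F (fun _ => mean ν n) - ∑ i, β n i * mean ν n, fun x => ?_⟩
        simp only [hR, mul_sub, Finset.sum_sub_distrib]
        ring
      simp_rw [e2]
      rw [integral_add (h.integrable_pi n (hRc n)) (integrable_const _)]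
      simp
    simp_rw [e1]
    set w := ∫ y, R n y ∂(Measure.pi fun _ : Fin k => ν n) with hwdef
    refine real_moment_of_nat (Q := Q) (h.integrable_pi n (by have := hRc n; fun_prop))
      (by positivity) (by linarith) hm ?_
    have hle : ∀ x : Fin k → ℝ, (∀ i, x i ∈ Set.Icc a b) → |R n x - w| ^ Q
        ≤ 2 ^ (Q - 1) * (∑ i, (M * k) ^ Q * |x i - mean ν n| ^ (2 * Q) + |w| ^ Q) := by
      intro x hx
      obtain ⟨i, -, hi⟩ := Finset.exists_max_image Finset.univ (fun i => |x i - mean ν n|)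
        ⟨⟨0, hk⟩, Finset.mem_univ _⟩
      have t1 : |R n x| ≤ (M * k) * |x i - mean ν n| ^ 2 := by
        refine (hT n x hx).trans ?_
        rw [mul_assoc]
        refine mul_le_mul_of_nonneg_left ?_ hM
        have := Finset.sum_le_card_nsmul Finset.univ (fun j => |x j - mean ν n| ^ 2)
          (|x i - mean ν n| ^ 2) fun j hj => pow_le_pow_left₀ (abs_nonneg _) (hi j hj) 2
        simpa using this
      have t2 : |R n x| ^ Q ≤ (M * k) ^ Q * |x i - mean ν n| ^ (2 * Q) := by
        rw [pow_mul, ← mul_pow]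
        exact pow_le_pow_left₀ (abs_nonneg _) t1 Q
      have t3 := Finset.single_le_sum (f := fun i => (M * k) ^ Q * |x i - mean ν n| ^ (2 * Q))
        (fun i _ => by positivity) (Finset.mem_univ i)
      calc |R n x - w| ^ Q ≤ (|R n x| + |w|) ^ Q :=
            pow_le_pow_left₀ (abs_nonneg _) (abs_sub _ _) Q
        _ ≤ 2 ^ (Q - 1) * (|R n x| ^ Q + |w| ^ Q) := add_pow_le (abs_nonneg _) (abs_nonneg _) Q
        _ ≤ _ := by
          refine mul_le_mul_of_nonneg_left ?_ (by positivity)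
          linarith
    have hint : ∫ x, |R n x - w| ^ Q ∂(Measure.pi fun _ : Fin k => ν n)
        ≤ ∫ x, 2 ^ (Q - 1) * (∑ i, (M * k) ^ Q * |x i - mean ν n| ^ (2 * Q) + |w| ^ Q)
          ∂(Measure.pi fun _ : Fin k => ν n) := by
      refine integral_mono_ae (h.integrable_pi n (by have := hRc n; fun_prop))
        (h.integrable_pi n (by fun_prop)) ?_
      filter_upwards [h.ae_box n] with x hx using hle x hx
    refine hint.trans ?_
    rw [integral_const_mul, integral_add (h.integrable_pi n (by fun_prop)) (integrable_const _),
      h.integral_sum_eval n (f := fun x => |x - mean ν n| ^ (2 * Q)) (by fun_prop)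
        fun _ => (M * k) ^ Q]
    simp only [Finset.sum_const, Finset.card_univ, Fintype.card_fin, nsmul_eq_mul,
      integral_const, probReal_univ, smul_eq_mul, one_mul]
    rw [hB, mul_assoc ((2 : ℝ) ^ (Q - 1))]
    refine mul_le_mul_of_nonneg_left ?_ (by positivity)
    have t1 : |w| ^ Q ≤ (M * k * C2) ^ Q * (τ ^ (2 * n)) ^ Q := by
      rw [← mul_pow]; exact pow_le_pow_left₀ (abs_nonneg _) (hER n) Q
    have t2 := hC' n
    rw [hQQ] at t2
    have t3 : (k * (M * k) ^ Q) * ∫ x, |x - mean ν n| ^ (2 * Q) ∂ν n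
        ≤ (k * (M * k) ^ Q) * (C' * (τ ^ (2 * Q)) ^ n) :=
      mul_le_mul_of_nonneg_left t2 (by positivity)
    have e3 : (τ ^ (2 * Q)) ^ n = (τ ^ (2 * n)) ^ Q := by
      rw [← pow_mul, ← pow_mul]; congr 1; ring
    rw [e3] at t3
    linarith
  · refine real_moment_of_nat (Q := Q) (h.integrable n (by fun_prop)) (by positivity)
      (by linarith) hm ?_
    have := hC n
    rwa [← pow_mul, mul_comm Q n, pow_mul] at this

end HierSeq

/-! ### Averaging functions near the limit point -/

/-- One-sided contraction for a monotone function: a single input exceeding the level `c + δ / 2` is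
contracted towards that level by a uniform factor. Close to the level this is the slope bound, away
from it compactness and the strict inequality. -/
lemma contract_up {a b c δ κ : ℝ} {k : ℕ} {F : (Fin k → ℝ) → ℝ} (hk : 0 < k) (hab : a < b)
    (hF : Continuous F) (hδ : 0 < δ) (hc : c ∈ Set.Icc a b) (hκ : κ < 1)
    (hub : ∀ x, (∀ i, x i ∈ Set.Icc a b) → F x ≤ b)
    (hmono : ∀ x y : Fin k → ℝ, (∀ i, x i ∈ Set.Icc a b) → (∀ i, y i ∈ Set.Icc a b) →
      (∀ i, x i ≤ y i) → F x ≤ F y)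
    (hstrict : ∀ u ∈ Set.Icc a b, ∀ y ∈ Set.Icc a b, u < y → ∀ i,
      F (Function.update (fun _ => u) i y) < y)
    (hslope : ∀ u ∈ Set.Icc a b, ∀ y ∈ Set.Icc a b, u ≤ y → |u - c| ≤ δ → |y - c| ≤ δ → ∀ i,
      F (Function.update (fun _ => u) i y) - u ≤ κ * (y - u)) :
    ∃ ρ, 0 ≤ ρ ∧ ρ < 1 ∧ ∀ x, (∀ i, x i ∈ Set.Icc a b) → ∀ i, (∀ j, j ≠ i → x j ≤ c + δ / 2) →
      F x - (c + δ / 2) ≤ ρ * max (x i - (c + δ / 2)) 0 := by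
  set u := c + δ / 2 with hu
  rcases lt_or_ge b u with hbu | hub'
  · refine ⟨0, le_rfl, one_pos, fun x hx i _ => ?_⟩
    have := hub x hx
    linarith
  have huI : u ∈ Set.Icc a b := ⟨by linarith [hc.1], hub'⟩
  have hgap : ∀ i : Fin k, ∃ η, 0 < η ∧ ∀ y ∈ Set.Icc (c + δ) b,
      η ≤ y - F (Function.update (fun _ => u) i y) := by
    intro i
    refine isCompact_Icc.exists_forall_le' (f := fun y => y - F (Function.update (fun _ => u) i y))
      ?_ fun y hy => ?_
    · have : Continuous fun y : ℝ => Function.update (fun _ : Fin k => u) i y :=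
        continuous_const.update i continuous_id
      exact (continuous_id.sub (hF.comp this)).continuousOn
    · have := hstrict u huI y ⟨by linarith [hy.1, hc.1], hy.2⟩ (by linarith [hy.1]) i
      linarith
  choose η hη0 hη using hgap
  have : Nonempty (Fin k) := ⟨⟨0, hk⟩⟩
  obtain ⟨i₀, hi₀⟩ := Finite.exists_min η
  have hba : 0 < b - a := by linarith
  have hq : 0 < η i₀ / (b - a) := div_pos (hη0 _) hba
  refine ⟨max 0 (max κ (1 - η i₀ / (b - a))), le_max_left _ _, ?_, fun x hx i hj => ?_⟩
  · exact max_lt one_pos (max_lt hκ (by linarith))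
  set ρ := max 0 (max κ (1 - η i₀ / (b - a))) with hρ
  have hρ1 : κ ≤ ρ := (le_max_left _ _).trans (le_max_right _ _)
  have hρ2 : 1 - η i₀ / (b - a) ≤ ρ := (le_max_right _ _).trans (le_max_right _ _)
  set y := max (x i) u with hy
  have hyI : y ∈ Set.Icc a b := ⟨(hx i).1.trans (le_max_left _ _), max_le (hx i).2 hub'⟩
  have huy : u ≤ y := le_max_right _ _
  have e1 : max (x i - u) 0 = y - u := by
    rw [hy, ← max_sub_sub_right, sub_self]
  have h1 : F x ≤ F (Function.update (fun _ => u) i y) := by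
    refine hmono _ _ hx (fun j => ?_) fun j => ?_
    · by_cases hji : j = i
      · subst hji; simpa using hyI
      · simpa [hji] using huI
    · by_cases hji : j = i
      · subst hji; simp [hy]
      · simpa [hji] using hj j hji
  rw [e1]
  rcases le_or_gt y (c + δ) with hyc | hyc
  · have h2 := hslope u huI y hyI huy (by rw [abs_le]; constructor <;> linarith)
      (by rw [abs_le]; constructor <;> linarith) i
    have h3 : κ * (y - u) ≤ ρ * (y - u) := mul_le_mul_of_nonneg_right hρ1 (by linarith)
    linarith
  · have h2 := hη i y ⟨hyc.le, hyI.2⟩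
    have h3 : η i₀ / (b - a) * (y - u) ≤ η i₀ := by
      rw [div_mul_eq_mul_div, div_le_iff₀ hba]
      exact mul_le_mul_of_nonneg_left (by linarith [hyI.2, huI.1]) (hη0 _).le
    have h4 := hi₀ i
    have h5 : (1 - η i₀ / (b - a)) * (y - u) ≤ ρ * (y - u) :=
      mul_le_mul_of_nonneg_right hρ2 (by linarith)
    linarith

/-- The mirror image of `contract_up`, obtained by conjugating `F` with `x ↦ -x`. -/
lemma contract_down {a b c δ κ : ℝ} {k : ℕ} {F : (Fin k → ℝ) → ℝ} (hk : 0 < k) (hab : a < b)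
    (hF : Continuous F) (hδ : 0 < δ) (hc : c ∈ Set.Icc a b) (hκ : κ < 1)
    (hlb : ∀ x, (∀ i, x i ∈ Set.Icc a b) → a ≤ F x)
    (hmono : ∀ x y : Fin k → ℝ, (∀ i, x i ∈ Set.Icc a b) → (∀ i, y i ∈ Set.Icc a b) →
      (∀ i, x i ≤ y i) → F x ≤ F y)
    (hstrict : ∀ u ∈ Set.Icc a b, ∀ y ∈ Set.Icc a b, y < u → ∀ i,
      y < F (Function.update (fun _ => u) i y))
    (hslope : ∀ u ∈ Set.Icc a b, ∀ y ∈ Set.Icc a b, y ≤ u → |u - c| ≤ δ → |y - c| ≤ δ → ∀ i,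
      u - F (Function.update (fun _ => u) i y) ≤ κ * (u - y)) :
    ∃ ρ, 0 ≤ ρ ∧ ρ < 1 ∧ ∀ x, (∀ i, x i ∈ Set.Icc a b) → ∀ i, (∀ j, j ≠ i → c - δ / 2 ≤ x j) →
      (c - δ / 2) - F x ≤ ρ * max ((c - δ / 2) - x i) 0 := by
  have hneg : ∀ {x : ℝ}, x ∈ Set.Icc (-b) (-a) → -x ∈ Set.Icc a b := fun {x} hx =>
    ⟨by linarith [hx.2], by linarith [hx.1]⟩
  have hupd : ∀ (u y : ℝ) (i : Fin k), (fun j => -(Function.update (fun _ : Fin k => u) i y) j)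
      = Function.update (fun _ => -u) i (-y) := by
    intro u y i
    funext j
    by_cases hji : j = i
    · subst hji; simp
    · simp [hji]
  obtain ⟨ρ, h0, h1, hρ⟩ := contract_up (a := -b) (b := -a) (c := -c) (δ := δ) (κ := κ)
    (F := fun x => -F fun i => -x i) hk (by linarith) (by fun_prop) hδ
    ⟨by linarith [hc.2], by linarith [hc.1]⟩ hκ
    (fun x hx => by have := hlb (fun i => -x i) fun i => hneg (hx i); linarith)
    (fun x y hx hy hxy => neg_le_neg (hmono _ _ (fun i => hneg (hy i)) (fun i => hneg (hx i))
      fun i => neg_le_neg (hxy i)))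
    (fun u hu y hy huy i => by
      have := hstrict (-u) (hneg hu) (-y) (hneg hy) (by linarith) i
      rw [hupd]; linarith)
    (fun u hu y hy huy huc hyc i => by
      have := hslope (-u) (hneg hu) (-y) (hneg hy) (by linarith)
        (by rw [← abs_neg]; convert huc using 2; ring)
        (by rw [← abs_neg]; convert hyc using 2; ring) i
      rw [hupd]; linarith)
  refine ⟨ρ, h0, h1, fun x hx i hj => ?_⟩
  have := hρ (fun i => -x i) (fun i => ⟨by linarith [(hx i).2], by linarith [(hx i).1]⟩) i
    fun j hji => by linarith [hj j hji]
  simp only [neg_neg] at this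
  rw [show -x i - (-c + δ / 2) = c - δ / 2 - x i by ring] at this
  linarith

section Averaging

variable {a b : ℝ} {k : ℕ} {F : (Fin k → ℝ) → ℝ}

lemma Averaging.diag (hF : Averaging (Set.Icc a b) k F) {u : ℝ} (hu : u ∈ Set.Icc a b) :
    F (fun _ => u) = u := by
  obtain ⟨⟨_, h1⟩, ⟨_, h2⟩⟩ := hF.1 (fun _ => u) fun _ => hu
  exact le_antisymm h2 h1

lemma Averaging.update_lt (hF : Averaging (Set.Icc a b) k F) (hk : 2 ≤ k) {u y : ℝ}
    (hu : u ∈ Set.Icc a b) (hy : y ∈ Set.Icc a b) (huy : u < y) (i : Fin k) :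
    F (Function.update (fun _ => u) i y) < y := by
  have : Nontrivial (Fin k) := Fin.nontrivial_iff_two_le.2 hk
  obtain ⟨j, hj⟩ := exists_ne i
  obtain ⟨z, hz, -, hzi, -, hlt⟩ := hF.2.2 u hu y hy huy j i hj
  refine lt_of_le_of_lt (hF.2.1 _ z (fun l => ?_) (fun l => ?_) fun l => ?_) hlt
  · by_cases hli : l = i
    · subst hli; simpa using hy
    · simpa [hli] using hu
  · rcases hz l with h | h <;> rw [h] <;> assumption
  · by_cases hli : l = i
    · subst hli; simp [hzi]
    · rcases hz l with h | h <;> simp [hli, h, huy.le]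

lemma Averaging.lt_update (hF : Averaging (Set.Icc a b) k F) (hk : 2 ≤ k) {u y : ℝ}
    (hu : u ∈ Set.Icc a b) (hy : y ∈ Set.Icc a b) (huy : y < u) (i : Fin k) :
    y < F (Function.update (fun _ => u) i y) := by
  have : Nontrivial (Fin k) := Fin.nontrivial_iff_two_le.2 hk
  obtain ⟨j, hj⟩ := exists_ne i
  obtain ⟨z, hz, hzi, -, hlt, -⟩ := hF.2.2 y hy u hu huy i j hj.symm
  refine lt_of_lt_of_le hlt (hF.2.1 z _ (fun l => ?_) (fun l => ?_) fun l => ?_)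
  · rcases hz l with h | h <;> rw [h] <;> assumption
  · by_cases hli : l = i
    · subst hli; simpa using hy
    · simpa [hli] using hu
  · by_cases hli : l = i
    · subst hli; simp [hzi]
    · rcases hz l with h | h <;> simp [hli, h, huy.le]

/-- Strict differentiability at the diagonal point of `c`, with gradient `α`, written out on the
box. -/
def LocallyLinear (a b : ℝ) {k : ℕ} (F : (Fin k → ℝ) → ℝ) (c : ℝ) (α : Fin k → ℝ) : Prop :=
  ∀ e : ℝ, 0 < e → ∃ δ, 0 < δ ∧ ∀ x y : Fin k → ℝ, (∀ i, x i ∈ Set.Icc a b) →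
    (∀ i, y i ∈ Set.Icc a b) → (∀ i, |x i - c| ≤ δ) → (∀ i, |y i - c| ≤ δ) →
    |F x - F y - ∑ i, α i * (x i - y i)| ≤ e * ∑ i, |x i - y i|

/-- An averaging function whose partial derivatives at the limit point are bounded away from `1`
satisfies `NearLinear`: the distance to the `δ / 2`-neighbourhood of `c` is a potential in the
sense of `potential_decay`, so the complement of the `δ`-neighbourhood is a legitimate bad set. -/
lemma HierSeq.nearLinear_of_averaging {ν : ℕ → Measure ℝ} (h : HierSeq a b F ν) (hab : a < b)
    (havg : Averaging (Set.Icc a b) k F) (hk : 2 ≤ k) {c : ℝ} (hc : c ∈ Set.Icc a b)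
    (hlim : Tendsto (fun n => ∫ x, |x - c| ∂ν n) atTop (nhds 0)) {α : Fin k → ℝ}
    (hloc : LocallyLinear a b F c α) {l : ℝ} (hl : l < 1)
    (hα : ∀ i, |α i| ≤ l) : HierSeq.NearLinear a b F ν α := by
  intro e he s hs
  obtain ⟨δ₁, hδ₁, hloc₁⟩ := hloc e he
  obtain ⟨δ₂, hδ₂, hloc₂⟩ := hloc ((1 - l) / 2) (by linarith)
  set δ := min δ₁ δ₂ with hδdef
  have hδ : 0 < δ := lt_min hδ₁ hδ₂
  set κ := (1 + l) / 2 with hκdef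
  have hκ : κ < 1 := by linarith
  have hslope : ∀ u ∈ Set.Icc a b, ∀ y ∈ Set.Icc a b, |u - c| ≤ δ → |y - c| ≤ δ → ∀ i,
      |F (Function.update (fun _ => u) i y) - u| ≤ κ * |y - u| := by
    intro u hu y hy huc hyc i
    have h1 := hloc₂ (Function.update (fun _ => u) i y) (fun _ => u)
      (fun j => by
        by_cases hji : j = i
        · subst hji; simpa using hy
        · simpa [hji] using hu) (fun _ => hu)
      (fun j => by
        by_cases hji : j = i
        · subst hji; simpa using hyc.trans (min_le_right _ _)
        · simpa [hji] using huc.trans (min_le_right _ _))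
      (fun _ => huc.trans (min_le_right _ _))
    rw [havg.diag hu, Finset.sum_eq_single i (fun j _ hji => by simp [hji]) (by simp),
      Finset.sum_eq_single i (fun j _ hji => by simp [hji]) (by simp), Function.update_self] at h1
    have h2 : |α i * (y - u)| ≤ l * |y - u| := by
      rw [abs_mul]; exact mul_le_mul_of_nonneg_right (hα i) (abs_nonneg _)
    have h3 := abs_add_le (F (Function.update (fun _ => u) i y) - u - α i * (y - u))
      (α i * (y - u))
    rw [sub_add_cancel] at h3
    have h4 : κ * |y - u| = (1 - l) / 2 * |y - u| + l * |y - u| := by rw [hκdef]; ring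
    linarith
  obtain ⟨ρ₁, hρ₁0, hρ₁1, hρ₁⟩ := contract_up (by omega) hab h.cont hδ hc hκ
    (fun x hx => (h.maps x hx).2) havg.2.1
    (fun u hu y hy huy i => havg.update_lt hk hu hy huy i)
    (fun u hu y hy huy huc hyc i => by
      have := hslope u hu y hy huc hyc i
      rw [abs_of_nonneg (sub_nonneg.2 huy)] at this
      exact (le_abs_self _).trans this)
  obtain ⟨ρ₂, hρ₂0, hρ₂1, hρ₂⟩ := contract_down (by omega) hab h.cont hδ hc hκ
    (fun x hx => (h.maps x hx).1) havg.2.1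
    (fun u hu y hy huy i => havg.lt_update hk hu hy huy i)
    (fun u hu y hy huy huc hyc i => by
      have := hslope u hu y hy huc hyc i
      rw [abs_sub_comm y u, abs_of_nonneg (sub_nonneg.2 huy), abs_sub_comm] at this
      exact (le_abs_self _).trans this)
  set r := δ / 2 with hr
  have hr0 : 0 < r := by positivity
  -- Normalised so that `w x ≥ 1` exactly when `|x - c| ≥ δ`.
  set w : ℝ → ℝ := fun x => max (|x - c| - r) 0 / r with hw
  have hwc : Continuous w := by rw [hw]; fun_prop
  have hw0 : ∀ x, 0 ≤ w x := fun x => by rw [hw]; positivity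
  have hwle : ∀ x, w x = 0 → |x - c| ≤ r := by
    intro x hx
    simp only [hw, div_eq_zero_iff, hr0.ne', or_false] at hx
    linarith [max_eq_right_iff.1 hx]
  obtain ⟨P, C, hP, hPC⟩ := h.potential_decay (w := w) (ψ := fun x => |x - c| / r) hwc
    (by fun_prop) hw0 (fun x => by positivity)
    (fun x hx => by
      rw [le_div_iff₀ hr0, one_mul]
      by_contra hlt
      exact hx (by simp only [hw]; rw [max_eq_right (by linarith), zero_div]))
    (by
      have := hlim.div_const r
      simpa [integral_div] using this)
    (hρ₁0.trans (le_max_left ρ₁ ρ₂)) (max_lt hρ₁1 hρ₂1)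
    (fun x hx => by
      suffices hs : ∃ i, |F x - c| ≤ |x i - c| by
        obtain ⟨i, hi⟩ := hs
        refine ⟨i, ?_⟩
        simp only [hw]
        gcongr
      obtain ⟨⟨i, hi⟩, ⟨j, hj⟩⟩ := havg.1 x hx
      rcases le_total c (F x) with hle | hle
      · exact ⟨j, abs_le_abs (by linarith) (by linarith)⟩
      · exact ⟨i, by
          rw [abs_sub_comm, abs_sub_comm (x i)]
          exact abs_le_abs (by linarith) (by linarith)⟩)
    (fun x hx i hj => by
      have hj' : ∀ j, j ≠ i → |x j - c| ≤ r := fun j hji => hwle _ (hj j hji)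
      have t1 := hρ₁ x hx i fun j hji => by linarith [(abs_le.1 (hj' j hji)).2]
      have t2 := hρ₂ x hx i fun j hji => by linarith [(abs_le.1 (hj' j hji)).1]
      simp only [hw]
      rw [← mul_div_assoc]
      refine div_le_div_of_nonneg_right (max_le ?_ (by positivity)) hr0.le
      have s1 : ρ₁ * max (x i - (c + r)) 0 ≤ max ρ₁ ρ₂ * max (|x i - c| - r) 0 :=
        mul_le_mul (le_max_left _ _)
          (max_le_max (by linarith [le_abs_self (x i - c)]) le_rfl) (le_max_right _ _)
          (hρ₁0.trans (le_max_left ρ₁ ρ₂))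
      have s2 : ρ₂ * max (c - r - x i) 0 ≤ max ρ₁ ρ₂ * max (|x i - c| - r) 0 :=
        mul_le_mul (le_max_right _ _)
          (max_le_max (by linarith [neg_abs_le (x i - c)]) le_rfl) (le_max_right _ _)
          (hρ₁0.trans (le_max_left ρ₁ ρ₂))
      have : |F x - c| ≤ max ρ₁ ρ₂ * max (|x i - c| - r) 0 + r := by
        rw [abs_le]; constructor <;> linarith
      linarith) hs
  obtain ⟨N, hN⟩ := eventually_atTop.1 (hlim.eventually_lt_const hδ)
  refine ⟨fun x => w x ^ P, C, N, by fun_prop, fun x => pow_nonneg (hw0 x) _, hPC,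
    fun n hn x hx => ?_⟩
  by_cases hbad : ∃ i, δ ≤ |x i - c|
  · obtain ⟨i, hi⟩ := hbad
    refine Or.inr ⟨i, one_le_pow₀ ?_⟩
    simp only [hw]
    rw [le_div_iff₀ hr0, one_mul]
    exact le_max_of_le_left (by linarith)
  · push Not at hbad
    left
    have hm : |HierSeq.mean ν n - c| < δ := by
      have hprob := h.prob
      have e1 : HierSeq.mean ν n - c = ∫ x, (x - c) ∂ν n := by
        rw [integral_sub (h.integrable n (f := fun x => x) continuous_id) (integrable_const _)]
        simp [HierSeq.mean]
      rw [e1]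
      exact abs_integral_le_integral_abs.trans_lt (hN n hn)
    exact hloc₁ x (fun _ => HierSeq.mean ν n) hx (fun _ => h.mean_mem n)
      (fun i => (hbad i).le.trans (min_le_left _ _)) (fun _ => hm.le.trans (min_le_left _ _))

end Averaging

/-! ### First and second order expansions on the cube -/

lemma apply_eq_sum_coord {k : ℕ} (L : (Fin k → ℝ) →L[ℝ] ℝ) (v : Fin k → ℝ) :
    L v = ∑ i, L (Pi.single i 1) * v i := by
  conv_lhs => rw [← Finset.univ_sum_single v, map_sum]
  refine Finset.sum_congr rfl fun i _ => ?_
  have : Pi.single i (v i) = v i • (Pi.single i 1 : Fin k → ℝ) := by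
    rw [← Pi.single_smul]; simp
  rw [this, map_smul, smul_eq_mul, mul_comm]

/-- A `C²` function on a cube is uniformly approximated to first order, with an error controlled by
the distance to the point of linearisation. -/
lemma exists_linearisation {a b : ℝ} {k : ℕ} (hab : a < b) {F : (Fin k → ℝ) → ℝ}
    (hF : ContDiffOn ℝ 2 F (Set.Icc (fun _ : Fin k => a) (fun _ => b))) :
    ∃ M, 0 ≤ M ∧ ∀ u : Fin k → ℝ, (∀ i, u i ∈ Set.Icc a b) → ∀ r : ℝ, 0 ≤ r →
      ∀ x y : Fin k → ℝ, (∀ i, x i ∈ Set.Icc a b) → (∀ i, y i ∈ Set.Icc a b) →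
      (∀ i, |x i - u i| ≤ r) → (∀ i, |y i - u i| ≤ r) →
      |F x - F y - ∑ i, fderivWithin ℝ F (Set.Icc (fun _ : Fin k => a) (fun _ => b)) u
        (Pi.single i 1) * (x i - y i)| ≤ M * r * ‖x - y‖ := by
  set box := Set.Icc (fun _ : Fin k => a) (fun _ => b) with hbox
  have hmem : ∀ x : Fin k → ℝ, (∀ i, x i ∈ Set.Icc a b) → x ∈ box := fun x hx =>
    ⟨fun i => (hx i).1, fun i => (hx i).2⟩
  have hU : UniqueDiffOn ℝ box := by
    rw [hbox, ← Set.pi_univ_Icc]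
    exact UniqueDiffOn.univ_pi fun i => uniqueDiffOn_Icc hab
  have hconv : Convex ℝ box := convex_Icc _ _
  have hD : ContDiffOn ℝ 1 (fun x => fderivWithin ℝ F box x) box :=
    hF.fderivWithin hU (by norm_num)
  obtain ⟨K, hK⟩ := hD.exists_lipschitzOnWith one_ne_zero hconv isCompact_Icc
  refine ⟨K, K.2, fun u hu r hr x y hx hy hxu hyu => ?_⟩
  have hball : ∀ v : Fin k → ℝ, (∀ i, |v i - u i| ≤ r) → v ∈ Metric.closedBall u r := by
    intro v hv
    rw [Metric.mem_closedBall, dist_eq_norm, pi_norm_le_iff_of_nonneg hr]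
    exact hv
  have := Convex.norm_image_sub_le_of_norm_hasFDerivWithin_le' (𝕜 := ℝ) (f := F)
    (f' := fderivWithin ℝ F box) (φ := fderivWithin ℝ F box u) (C := K * r)
    (s := box ∩ Metric.closedBall u r) (x := y) (y := x)
    (fun z hz => ((hF.differentiableOn (by norm_num)) z hz.1).hasFDerivWithinAt.mono
      Set.inter_subset_left)
    (fun z hz => by
      refine (hK.norm_sub_le hz.1 (hmem u hu)).trans ?_
      have h2 := hz.2
      rw [Metric.mem_closedBall, dist_eq_norm] at h2
      exact mul_le_mul_of_nonneg_left h2 K.2)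
    (hconv.inter (convex_closedBall _ _)) ⟨hmem y hy, hball y hyu⟩ ⟨hmem x hx, hball x hxu⟩
  rw [apply_eq_sum_coord, Real.norm_eq_abs] at this
  simpa using this

lemma norm_le_sum_abs {k : ℕ} (v : Fin k → ℝ) : ‖v‖ ≤ ∑ i, |v i| := by
  rw [pi_norm_le_iff_of_nonneg (Finset.sum_nonneg fun i _ => abs_nonneg _)]
  exact fun i => Finset.single_le_sum (f := fun i => |v i|) (fun i _ => abs_nonneg _)
    (Finset.mem_univ i)

lemma norm_sq_le_sum_sq {k : ℕ} (v : Fin k → ℝ) : ‖v‖ ^ 2 ≤ ∑ i, |v i| ^ 2 := by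
  have h0 : 0 ≤ ∑ i, |v i| ^ 2 := Finset.sum_nonneg fun i _ => sq_nonneg _
  rw [← Real.le_sqrt (norm_nonneg _) h0, pi_norm_le_iff_of_nonneg (Real.sqrt_nonneg _)]
  intro i
  refine Real.abs_le_sqrt ?_
  rw [← sq_abs]
  exact Finset.single_le_sum (f := fun i => |v i| ^ 2) (fun i _ => sq_nonneg _) (Finset.mem_univ i)

lemma locallyLinear_of_contDiffOn {a b : ℝ} {k : ℕ} (hab : a < b) {F : (Fin k → ℝ) → ℝ}
    (hF : ContDiffOn ℝ 2 F (Set.Icc (fun _ : Fin k => a) (fun _ => b))) {c : ℝ}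
    (hc : c ∈ Set.Icc a b) :
    LocallyLinear a b F c fun i => fderivWithin ℝ F (Set.Icc (fun _ : Fin k => a) (fun _ => b))
      (fun _ => c) (Pi.single i 1) := by
  obtain ⟨M, hM, H⟩ := exists_linearisation hab hF
  intro e he
  refine ⟨e / (M + 1), by positivity, fun x y hx hy hxc hyc => ?_⟩
  refine (H (fun _ => c) (fun _ => hc) _ (by positivity) x y hx hy hxc hyc).trans ?_
  refine mul_le_mul ?_ (norm_le_sum_abs _) (norm_nonneg _) he.le
  rw [mul_div_assoc', div_le_iff₀ (by positivity)]
  nlinarith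

lemma exists_taylor {a b : ℝ} {k : ℕ} (hab : a < b) {F : (Fin k → ℝ) → ℝ}
    (hF : ContDiffOn ℝ 2 F (Set.Icc (fun _ : Fin k => a) (fun _ => b))) :
    ∃ M, 0 ≤ M ∧ ∀ m ∈ Set.Icc a b, ∀ x : Fin k → ℝ, (∀ i, x i ∈ Set.Icc a b) →
      |F x - F (fun _ => m) - ∑ i, fderivWithin ℝ F (Set.Icc (fun _ : Fin k => a) (fun _ => b))
        (fun _ => m) (Pi.single i 1) * (x i - m)| ≤ M * ∑ i, |x i - m| ^ 2 := by
  obtain ⟨M, hM, H⟩ := exists_linearisation hab hF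
  refine ⟨M, hM, fun m hm x hx => ?_⟩
  set v : Fin k → ℝ := x - fun _ => m with hv
  refine (H (fun _ => m) (fun _ => hm) ‖v‖ (norm_nonneg _) x (fun _ => m) hx (fun _ => hm)
    (fun i => norm_le_pi_norm v i) (fun i => by simp)).trans ?_
  rw [mul_assoc, ← hv, ← sq]
  exact mul_le_mul_of_nonneg_left (norm_sq_le_sum_sq v) hM

/-- Away from the origin the scaling constant is forced to be `1`: it maps both end points of the
interval, which have the same sign, into the interval. -/
lemma averaging_of_scaled {a b : ℝ} {k : ℕ} (hab : a < b) {F : (Fin k → ℝ) → ℝ}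
    (hmaps : ∀ x ∈ Set.Icc (fun _ : Fin k => a) (fun _ => b), F x ∈ Set.Icc a b)
    (havg : Averaging (Set.Icc a b) k (fun x => F x / F (fun _ => 1)))
    (h0 : (0 : ℝ) ∉ Set.Icc a b) : Averaging (Set.Icc a b) k F := by
  set r := F (fun _ => 1) with hr
  have ha : a ∈ Set.Icc a b := ⟨le_rfl, hab.le⟩
  have hb : b ∈ Set.Icc a b := ⟨hab.le, le_rfl⟩
  have hda : F (fun _ => a) / r = a := Averaging.diag havg ha
  have hdb : F (fun _ => b) / r = b := Averaging.diag havg hb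
  have hr0 : r ≠ 0 := by
    intro h
    rw [h, div_zero] at hda hdb
    linarith
  rw [div_eq_iff hr0] at hda hdb
  have h1 := (hmaps (fun _ => a) ⟨le_rfl, fun _ => hab.le⟩).1
  have h2 := (hmaps (fun _ => b) ⟨fun _ => hab.le, le_rfl⟩).2
  rw [hda] at h1
  rw [hdb] at h2
  have hr1 : r = 1 := by
    rcases lt_or_ge 0 a with h | h
    · nlinarith
    · have : b < 0 := by
        by_contra h'
        exact h0 ⟨h, not_lt.1 h'⟩
      nlinarith
  rw [hr1] at havg
  simpa using havg

/-- A positively homogeneous function on a cube containing the origin that is differentiable there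
is linear. -/
lemma eq_fderivWithin_of_homogeneous {a b : ℝ} {k : ℕ} {F : (Fin k → ℝ) → ℝ}
    (h0 : (0 : ℝ) ∈ Set.Icc a b)
    (hF : DifferentiableOn ℝ F (Set.Icc (fun _ : Fin k => a) (fun _ => b)))
    (hhom : ∀ t : ℝ, 0 < t → ∀ x : Fin k → ℝ,
          (∀ i, x i ∈ Set.Icc a b) → (∀ i, t * x i ∈ Set.Icc a b) →
          F (fun i => t * x i) = t * F x) {x : Fin k → ℝ} (hx : ∀ i, x i ∈ Set.Icc a b) :
    F x = fderivWithin ℝ F (Set.Icc (fun _ : Fin k => a) (fun _ => b)) 0 x := by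
  set box := Set.Icc (fun _ : Fin k => a) (fun _ => b) with hbox
  have h0b : (0 : Fin k → ℝ) ∈ box := ⟨fun _ => h0.1, fun _ => h0.2⟩
  have hF0 : F 0 = 0 := by
    have := hhom (1 / 2) (by norm_num) 0 (fun _ => h0) (fun _ => by simpa using h0)
    have e : (fun i => 1 / 2 * (0 : Fin k → ℝ) i) = 0 := by ext; simp
    rw [e] at this
    linarith
  have hd := (hF 0 h0b).hasFDerivWithinAt
  have hmem : ∀ t ∈ Set.Icc (0 : ℝ) 1, ∀ i, t * x i ∈ Set.Icc a b := by
    intro t ht i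
    have := (convex_Icc a b).smul_mem_of_zero_mem h0 (hx i) ht
    simpa using this
  have hg : HasDerivWithinAt (fun t : ℝ => t • x) x (Set.Icc 0 1) 0 := by
    simpa using ((hasDerivAt_id (0 : ℝ)).smul_const x).hasDerivWithinAt
  have h1 : HasDerivWithinAt (fun t : ℝ => F (t • x)) (fderivWithin ℝ F box 0 x) (Set.Icc 0 1) 0 := by
    have hd' : HasFDerivWithinAt F (fderivWithin ℝ F box 0) box ((0 : ℝ) • x) := by simpa using hd
    have hst : Set.MapsTo (fun t : ℝ => t • x) (Set.Icc 0 1) box := fun t ht =>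
      ⟨fun i => (hmem t ht i).1, fun i => (hmem t ht i).2⟩
    exact hd'.comp_hasDerivWithinAt 0 hg hst
  have h2 : HasDerivWithinAt (fun t : ℝ => F (t • x)) (F x) (Set.Icc 0 1) 0 := by
    have : HasDerivWithinAt (fun t : ℝ => t * F x) (F x) (Set.Icc 0 1) 0 := by
      simpa using ((hasDerivAt_id (0 : ℝ)).mul_const (F x)).hasDerivWithinAt
    refine this.congr (fun t ht => ?_) (by simp [hF0])
    rcases ht.1.eq_or_lt with h | h
    · simp [← h, hF0]
    · exact hhom t h x hx (hmem t ht)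
  exact (uniqueDiffOn_Icc_zero_one 0 (by simp)).eq_deriv _ h2 h1

/-! ### Reduction to continuous functions and to the two classes -/

lemma exists_continuous_extension {a b : ℝ} {k : ℕ} (hab : a < b) {F : (Fin k → ℝ) → ℝ}
    (hF : ContinuousOn F (Set.Icc (fun _ : Fin k => a) (fun _ => b))) :
    ∃ G : (Fin k → ℝ) → ℝ, Continuous G ∧ ∀ x, (∀ i, x i ∈ Set.Icc a b) → G x = F x := by
  refine ⟨fun x => F fun i => (Set.projIcc a b hab.le (x i) : ℝ), ?_, fun x hx => ?_⟩
  · refine hF.comp_continuous (f := fun (x : Fin k → ℝ) i => (Set.projIcc a b hab.le (x i) : ℝ)) ?_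
      fun x => ⟨fun i => (Set.projIcc a b hab.le (x i)).2.1,
        fun i => (Set.projIcc a b hab.le (x i)).2.2⟩
    exact continuous_pi fun i =>
      continuous_subtype_val.comp (continuous_projIcc.comp (continuous_apply i))
  · refine congrArg F (funext fun i => ?_)
    rw [Set.projIcc_of_mem hab.le (hx i)]

lemma Averaging.congr {D : Set ℝ} {k : ℕ} {F G : (Fin k → ℝ) → ℝ} (hF : Averaging D k F)
    (h : ∀ x, (∀ i, x i ∈ D) → G x = F x) : Averaging D k G := by
  refine ⟨fun x hx => ?_, fun x y hx hy hxy => ?_, fun x hx y hy hxy i₁ i₂ hi => ?_⟩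
  · rw [h x hx]; exact hF.1 x hx
  · rw [h x hx, h y hy]; exact hF.2.1 x y hx hy hxy
  · obtain ⟨z, hz, h1, h2, h3⟩ := hF.2.2 x hx y hy hxy i₁ i₂ hi
    refine ⟨z, hz, h1, h2, ?_⟩
    rw [h z fun i => by rcases hz i with e | e <;> rw [e] <;> assumption]
    exact h3

lemma LocallyLinear.congr {a b c : ℝ} {k : ℕ} {F G : (Fin k → ℝ) → ℝ} {α : Fin k → ℝ}
    (hF : LocallyLinear a b F c α) (h : ∀ x, (∀ i, x i ∈ Set.Icc a b) → G x = F x) :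
    LocallyLinear a b G c α := by
  intro e he
  obtain ⟨δ, hδ, H⟩ := hF e he
  refine ⟨δ, hδ, fun x y hx hy => ?_⟩
  rw [h x hx, h y hy]
  exact H x y hx hy

/-- The laws only see `F` on the cube, so `F` may be replaced by a continuous extension. -/
lemma hierSeq_of_extension {a b : ℝ} {k : ℕ} {F G : (Fin k → ℝ) → ℝ}
    (hmaps : ∀ x ∈ Set.Icc (fun _ : Fin k => a) (fun _ => b), F x ∈ Set.Icc a b)
    (hG : Continuous G) (hGF : ∀ x, (∀ i, x i ∈ Set.Icc a b) → G x = F x)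
    {ν : ℕ → Measure ℝ} (hprob : ∀ n, IsProbabilityMeasure (ν n))
    (hν0 : ν 0 (Set.Icc a b) = 1)
    (hrec : ∀ n, ν (n + 1) = Measure.map F (Measure.pi fun _ : Fin k => ν n)) :
    HierSeq a b G ν := by
  have hbox : ∀ n, (∀ᵐ x ∂ν n, x ∈ Set.Icc a b) →
      ∀ᵐ x ∂(Measure.pi fun _ : Fin k => ν n), ∀ i, x i ∈ Set.Icc a b := by
    intro n hn
    rw [ae_all_iff]
    intro i
    exact (measurePreserving_eval (fun _ : Fin k => ν n) i).quasiMeasurePreserving.ae hn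
  have hmap : ∀ n, (∀ᵐ x ∂ν n, x ∈ Set.Icc a b) →
      ν (n + 1) = Measure.map G (Measure.pi fun _ : Fin k => ν n) := by
    intro n hn
    rw [hrec n]
    refine Measure.map_congr ?_
    filter_upwards [hbox n hn] with x hx
    exact (hGF x hx).symm
  have hGm : ∀ x, (∀ i, x i ∈ Set.Icc a b) → G x ∈ Set.Icc a b := fun x hx => by
    rw [hGF x hx]
    exact hmaps x ⟨fun i => (hx i).1, fun i => (hx i).2⟩
  have hsupp : ∀ n, ∀ᵐ x ∂ν n, x ∈ Set.Icc a b := by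
    intro n
    induction n with
    | zero => exact (mem_ae_iff_prob_eq_one measurableSet_Icc).2 hν0
    | succ n ih =>
      rw [hmap n ih]
      refine (ae_map_iff hG.aemeasurable measurableSet_Icc).2 ?_
      filter_upwards [hbox n ih] with x hx
      exact hGm x hx
  exact ⟨hprob, hsupp, hG, hGm, fun n => hmap n (hsupp n)⟩

lemma HierSeq.limit_mem {a b c : ℝ} {k : ℕ} {G : (Fin k → ℝ) → ℝ} {ν : ℕ → Measure ℝ}
    (h : HierSeq a b G ν)
    (hprob : ∀ ε : ℝ, 0 < ε → Tendsto (fun n => ν n {x : ℝ | ε < |x - c|}) atTop (nhds 0)) :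
    c ∈ Set.Icc a b := by
  have := h.prob
  by_contra hc
  have key : ∃ ε : ℝ, 0 < ε ∧ ∀ x ∈ Set.Icc a b, ε < |x - c| := by
    rcases lt_or_ge c a with h1 | h1
    · exact ⟨(a - c) / 2, by linarith, fun x hx => lt_of_lt_of_le (by linarith [hx.1])
        (le_abs_self _)⟩
    · have h2 : b < c := by
        by_contra h2
        exact hc ⟨h1, not_lt.1 h2⟩
      exact ⟨(c - b) / 2, by linarith, fun x hx => lt_of_lt_of_le (by linarith [hx.2])
        (neg_le_abs _)⟩
  obtain ⟨ε, hε, H⟩ := key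
  have h1 : ∀ n, ν n {x : ℝ | ε < |x - c|} = 1 := by
    intro n
    have : ∀ᵐ x ∂ν n, x ∈ {x : ℝ | ε < |x - c|} := by
      filter_upwards [h.supp n] with x hx
      exact H x hx
    have e := measure_congr (eventuallyEq_univ.2 this)
    rwa [measure_univ] at e
  have h2 := hprob ε hε
  simp only [h1] at h2
  exact one_ne_zero (tendsto_nhds_unique tendsto_const_nhds h2)

/-- On a bounded interval, convergence in probability implies convergence in `L¹`. -/
lemma HierSeq.tendsto_integral_abs_sub {a b c : ℝ} {k : ℕ} {G : (Fin k → ℝ) → ℝ}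
    {ν : ℕ → Measure ℝ} (h : HierSeq a b G ν) (hab : a < b) (hc : c ∈ Set.Icc a b)
    (hprob : ∀ ε : ℝ, 0 < ε → Tendsto (fun n => ν n {x : ℝ | ε < |x - c|}) atTop (nhds 0)) :
    Tendsto (fun n => ∫ x, |x - c| ∂ν n) atTop (nhds 0) := by
  have := h.prob
  rw [Metric.tendsto_atTop]
  intro η hη
  have h1 := (ENNReal.tendsto_toReal ENNReal.zero_ne_top).comp (hprob (η / 2) (by linarith))
  rw [ENNReal.toReal_zero, Metric.tendsto_atTop] at h1
  obtain ⟨N, hN⟩ := h1 (η / (2 * (b - a))) (by have := sub_pos.2 hab; positivity)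
  refine ⟨N, fun n hn => ?_⟩
  have h2 := hN n hn
  simp only [Function.comp_apply, Real.dist_eq, sub_zero] at h2 ⊢
  rw [abs_of_nonneg ENNReal.toReal_nonneg] at h2
  rw [abs_of_nonneg (integral_nonneg fun x => abs_nonneg _)]
  set S := {x : ℝ | η / 2 < |x - c|} with hS
  have hSm : MeasurableSet S := measurableSet_lt measurable_const (by fun_prop)
  have h3 : ∫ x, |x - c| ∂ν n ≤ ∫ x, (η / 2 + S.indicator (fun _ => b - a) x) ∂ν n := by
    refine integral_mono_ae (h.integrable n (by fun_prop)) ((integrable_const _).add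
      ((integrable_const _).indicator hSm)) ?_
    filter_upwards [h.supp n] with x hx
    by_cases hxS : x ∈ S
    · simp only [hxS, Set.indicator_of_mem]
      have : |x - c| ≤ b - a := by
        rw [abs_le]; constructor <;> linarith [hx.1, hx.2, hc.1, hc.2]
      linarith
    · simp only [hxS, not_false_eq_true, Set.indicator_of_notMem, add_zero]
      exact not_lt.1 hxS
  rw [integral_add (integrable_const _) ((integrable_const _).indicator hSm),
    integral_indicator_const _ hSm, integral_const] at h3
  simp only [probReal_univ, smul_eq_mul] at h3
  have hba := sub_pos.2 hab
  have h4 : (ν n).real S * (b - a) < η / 2 := by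
    rw [lt_div_iff₀ (by positivity)] at h2
    have : (ν n).real S = (ν n S).toReal := rfl
    rw [this]; linarith
  linarith

/-- Both admissible classes of `F` satisfy `NearLinear`: a scaled averaging homogeneous function is
averaging if the cube misses the origin, and it is linear on the cube otherwise. -/
lemma nearLinear_of_hypotheses {a b : ℝ} {k : ℕ} (hab : a < b) (hk : 2 ≤ k)
    {F G : (Fin k → ℝ) → ℝ}
    (hmaps : ∀ x ∈ Set.Icc (fun _ : Fin k => a) (fun _ => b), F x ∈ Set.Icc a b)
    (hF : ContDiffOn ℝ 2 F (Set.Icc (fun _ : Fin k => a) (fun _ => b)))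
    (havg : Averaging (Set.Icc a b) k F ∨
      (Averaging (Set.Icc a b) k (fun x => F x / F (fun _ => 1)) ∧
        ∀ t : ℝ, 0 < t → ∀ x : Fin k → ℝ,
          (∀ i, x i ∈ Set.Icc a b) → (∀ i, t * x i ∈ Set.Icc a b) →
          F (fun i => t * x i) = t * F x))
    (hGF : ∀ x, (∀ i, x i ∈ Set.Icc a b) → G x = F x)
    {ν : ℕ → Measure ℝ} (h : HierSeq a b G ν) {c : ℝ}
    (hprob : ∀ ε : ℝ, 0 < ε → Tendsto (fun n => ν n {x : ℝ | ε < |x - c|}) atTop (nhds 0))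
    {α : Fin k → ℝ}
    (hα : α = fun i => fderivWithin ℝ F (Set.Icc (fun _ : Fin k => a) (fun _ => b))
      (fun _ => c) (Pi.single i 1)) (hα1 : ∑ i, α i ^ 2 < 1) :
    HierSeq.NearLinear a b G ν α := by
  have hc := h.limit_mem hprob
  by_cases hA : Averaging (Set.Icc a b) k F
  · refine h.nearLinear_of_averaging hab (hA.congr hGF) hk hc
      (h.tendsto_integral_abs_sub hab hc hprob) (l := √(∑ i, α i ^ 2)) ?_ ?_ fun i => ?_
    · rw [hα]
      exact (locallyLinear_of_contDiffOn hab hF hc).congr hGF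
    · rw [Real.sqrt_lt' one_pos]
      simpa using hα1
    · exact Real.abs_le_sqrt (Finset.single_le_sum (f := fun i => α i ^ 2)
        (fun i _ => sq_nonneg _) (Finset.mem_univ i))
  obtain ⟨hS, hhom⟩ := havg.resolve_left hA
  have h0 : (0 : ℝ) ∈ Set.Icc a b := by
    by_contra h0
    exact hA (averaging_of_scaled hab hmaps hS h0)
  set box := Set.Icc (fun _ : Fin k => a) (fun _ => b) with hbox
  set L := fderivWithin ℝ F box 0 with hL
  have hFL : ∀ x : Fin k → ℝ, (∀ i, x i ∈ Set.Icc a b) → F x = L x := fun x hx =>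
    eq_fderivWithin_of_homogeneous h0 (hF.differentiableOn (by norm_num)) hhom hx
  have hU : UniqueDiffOn ℝ box := by
    rw [hbox, ← Set.pi_univ_Icc]
    exact UniqueDiffOn.univ_pi fun i => uniqueDiffOn_Icc hab
  have hcb : (fun _ : Fin k => c) ∈ box := ⟨fun _ => hc.1, fun _ => hc.2⟩
  have hαL : ∀ i, α i = L (Pi.single i 1) := by
    intro i
    rw [hα]
    simp only
    rw [fderivWithin_congr (f₁ := F) (f := L)
      (fun x hx => hFL x fun i => ⟨hx.1 i, hx.2 i⟩) (hFL _ fun _ => hc),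
      L.fderivWithin (hU _ hcb)]
  intro e he s hs
  refine ⟨fun _ => 0, 0, 0, continuous_const, fun _ => le_rfl, fun n => by simp, ?_⟩
  intro n _ x hx
  left
  have hm := h.mean_mem n
  have e1 : F x - F (fun _ => HierSeq.mean ν n) = ∑ i, α i * (x i - HierSeq.mean ν n) := by
    rw [hFL x hx, hFL _ fun _ => hm, ← map_sub, apply_eq_sum_coord]
    exact Finset.sum_congr rfl fun i _ => by rw [hαL]; rfl
  rw [hGF x hx, hGF _ fun _ => hm, e1, sub_self, abs_zero]
  exact mul_nonneg he.le (Finset.sum_nonneg fun i _ => abs_nonneg _)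

/-- Bounds that do not depend on `n`; nothing more is needed when the rate `λ + ε` is at least
one. -/
lemma HierSeq.trivial_bounds {a b M p : ℝ} {k : ℕ} {G : (Fin k → ℝ) → ℝ} {ν : ℕ → Measure ℝ}
    (h : HierSeq a b G ν) (hp : 1 ≤ p) (hM : 0 ≤ M) {β : ℕ → Fin k → ℝ}
    (hT : ∀ n, ∀ x, (∀ i, x i ∈ Set.Icc a b) →
      |G x - G (fun _ => mean ν n) - ∑ i, β n i * (x i - mean ν n)|
        ≤ M * ∑ i, |x i - mean ν n| ^ 2) :
    ∃ CZ CX : ℝ, 1 ≤ CZ ∧ 1 ≤ CX ∧ ∀ n,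
      (∫ x, |(G x - ∑ i, β n i * x i) - ∫ y, (G y - ∑ i, β n i * y i)
        ∂(Measure.pi fun _ : Fin k => ν n)| ^ p ∂(Measure.pi fun _ : Fin k => ν n)) ≤ CZ ∧
      (∫ x, |x - mean ν n| ^ p ∂ν n) ≤ CX := by
  have := h.prob
  have hp0 : 0 ≤ p := by linarith
  set B := M * (k * (b - a) ^ 2) with hB
  have hB0 : 0 ≤ B := by positivity
  refine ⟨max 1 ((2 * B) ^ p), max 1 ((b - a) ^ p), le_max_left _ _, le_max_left _ _,
    fun n => ⟨?_, ?_⟩⟩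
  · set R : (Fin k → ℝ) → ℝ := fun x => G x - ∑ i, β n i * x i with hR
    set d := G (fun _ => mean ν n) - ∑ i, β n i * mean ν n with hd
    have hRc : Continuous R := by
      have := h.cont
      fun_prop
    have hRd : ∀ x, (∀ i, x i ∈ Set.Icc a b) → |R x - d| ≤ B := by
      intro x hx
      have h1 := hT n x hx
      have h2 : ∑ i, |x i - mean ν n| ^ 2 ≤ ∑ i : Fin k, (b - a) ^ 2 := by
        refine Finset.sum_le_sum fun i _ => ?_
        have hm := h.mean_mem n
        have : |x i - mean ν n| ≤ b - a := by
          rw [abs_le]; constructor <;> linarith [(hx i).1, (hx i).2, hm.1, hm.2]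
        gcongr
      rw [Finset.sum_const, Finset.card_univ, Fintype.card_fin, nsmul_eq_mul] at h2
      have e1 : R x - d = G x - G (fun _ => mean ν n) - ∑ i, β n i * (x i - mean ν n) := by
        simp only [hR, hd, mul_sub, Finset.sum_sub_distrib]; ring
      rw [e1]
      exact h1.trans (mul_le_mul_of_nonneg_left h2 hM)
    have hE : |∫ y, R y ∂(Measure.pi fun _ : Fin k => ν n) - d| ≤ B := by
      have e1 : ∫ y, R y ∂(Measure.pi fun _ : Fin k => ν n) - d
          = ∫ y, (R y - d) ∂(Measure.pi fun _ : Fin k => ν n) := by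
        rw [integral_sub (h.integrable_pi n hRc) (integrable_const _)]; simp
      rw [e1, ← Real.norm_eq_abs]
      refine (norm_integral_le_of_norm_le_const (C := B) ?_).trans (by simp)
      filter_upwards [h.ae_box n] with x hx using hRd x hx
    refine le_trans ?_ (le_max_right _ _)
    refine le_trans (le_abs_self _) ?_
    rw [← Real.norm_eq_abs]
    refine (norm_integral_le_of_norm_le_const (C := (2 * B) ^ p) ?_).trans (by simp)
    filter_upwards [h.ae_box n] with x hx
    rw [Real.norm_of_nonneg (by positivity)]
    refine Real.rpow_le_rpow (abs_nonneg _) ?_ hp0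
    have h1 := abs_le.1 (hRd x hx)
    have h2 := abs_le.1 hE
    rw [abs_le]
    constructor <;> simp only [hR] at * <;> linarith [h1.1, h1.2, h2.1, h2.2]
  · refine le_trans ?_ (le_max_right _ _)
    refine le_trans (le_abs_self _) ?_
    rw [← Real.norm_eq_abs]
    refine (norm_integral_le_of_norm_le_const (C := (b - a) ^ p) ?_).trans (by simp)
    filter_upwards [h.supp n] with x hx
    rw [Real.norm_of_nonneg (by positivity)]
    have hm := h.mean_mem n
    refine Real.rpow_le_rpow (abs_nonneg _) ?_ hp0
    rw [abs_le]; constructor <;> linarith [hx.1, hx.2, hm.1, hm.2]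

/-! ### The moment bounds -/

/-- Proposition 4.1.  For the hierarchical sequence generated by an
averaging (or scaled averaging and positively homogeneous) `C²` function
`F : [a,b]^k → [a,b]` from nonconstant `X₀` supported in `[a,b]`, with `X_n →p c`,
`c_n = E X_n`, `α_n = F'(c_n,…,c_n)`, `λ = ‖F'(c,…,c)‖` and
`Z_n = F(X_n) − α_n · X_n` (defined on the product space of `k` i.i.d. copies of
`X_n`), for every real `p ≥ 1` and `ε > 0` there are constants `C_{Z,p}`, `C_{X,p}`
with `E|Z_n − E Z_n|^p ≤ C_{Z,p}^p (λ+ε)^{2pn}` and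
`E|X_n − c_n|^p ≤ C_{X,p}^p (λ+ε)^{pn}` for all `n`. -/
theorem hierarchical_moment_bounds
    (a b : ℝ) (hab : a < b) {k : ℕ} (hk : 2 ≤ k)
    (F : (Fin k → ℝ) → ℝ)
    (hmaps : ∀ x ∈ Set.Icc (fun _ : Fin k => a) (fun _ => b), F x ∈ Set.Icc a b)
    (hF : ContDiffOn ℝ 2 F (Set.Icc (fun _ : Fin k => a) (fun _ => b)))
    (havg : Averaging (Set.Icc a b) k F ∨
      (Averaging (Set.Icc a b) k (fun x => F x / F (fun _ => 1)) ∧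
        ∀ t : ℝ, 0 < t → ∀ x : Fin k → ℝ,
          (∀ i, x i ∈ Set.Icc a b) → (∀ i, t * x i ∈ Set.Icc a b) →
          F (fun i => t * x i) = t * F x))
    (ν : ℕ → Measure ℝ) [∀ n, IsProbabilityMeasure (ν n)]
    (hν0 : ν 0 (Set.Icc a b) = 1)
    (hnonconst : ∀ r : ℝ, ν 0 ≠ Measure.dirac r)
    (hrec : ∀ n, ν (n + 1) = Measure.map F (Measure.pi fun _ : Fin k => ν n))
    (c : ℝ)
    (hprob : ∀ ε : ℝ, 0 < ε →
      Tendsto (fun n => ν n {x : ℝ | ε < |x - c|}) atTop (nhds 0))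
    (cseq : ℕ → ℝ) (hcseq : ∀ n, cseq n = ∫ x, x ∂ν n)
    (αn : ℕ → Fin k → ℝ)
    (hαn : ∀ n, αn n = fun i =>
      fderivWithin ℝ F (Set.Icc (fun _ : Fin k => a) (fun _ => b))
        (fun _ => cseq n) (Pi.single i 1))
    (lam : ℝ)
    (hlam : lam = Real.sqrt (∑ i,
      (fderivWithin ℝ F (Set.Icc (fun _ : Fin k => a) (fun _ => b))
        (fun _ => c) (Pi.single i 1)) ^ 2))
    (Z : ℕ → (Fin k → ℝ) → ℝ)
    (hZ : ∀ n, Z n = fun x => F x - ∑ i, αn n i * x i) :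
    ∀ p : ℝ, 1 ≤ p → ∀ ε : ℝ, 0 < ε → ∃ CZ CX : ℝ, ∀ n : ℕ,
      (∫ x, |Z n x - ∫ y, Z n y ∂(Measure.pi fun _ : Fin k => ν n)| ^ p
          ∂(Measure.pi fun _ : Fin k => ν n))
        ≤ CZ ^ p * (lam + ε) ^ (2 * p * n) ∧
      (∫ x, |x - cseq n| ^ p ∂ν n) ≤ CX ^ p * (lam + ε) ^ (p * n) := by
  intro p hp ε hε
  have hp0 : 0 ≤ p := by linarith
  have hprobν : ∀ n, IsProbabilityMeasure (ν n) := fun n => inferInstance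
  obtain ⟨G, hG, hGF⟩ := exists_continuous_extension hab hF.continuousOn
  have h : HierSeq a b G ν := hierSeq_of_extension hmaps hG hGF hprobν hν0 hrec
  obtain rfl : cseq = HierSeq.mean ν := funext hcseq
  obtain ⟨M, hM, hT⟩ := exists_taylor hab hF
  have hTG : ∀ n, ∀ x : Fin k → ℝ, (∀ i, x i ∈ Set.Icc a b) →
      |G x - G (fun _ => HierSeq.mean ν n) - ∑ i, αn n i * (x i - HierSeq.mean ν n)|
        ≤ M * ∑ i, |x i - HierSeq.mean ν n| ^ 2 := by
    intro n x hx
    rw [hGF x hx, hGF _ fun _ => h.mean_mem n, hαn n]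
    exact hT _ (h.mean_mem n) x hx
  have hlam0 : 0 ≤ lam := hlam ▸ Real.sqrt_nonneg _
  set τ := lam + ε with hτ
  have hτ0 : 0 < τ := by linarith
  -- It suffices to bound the moments of `G` with constants that do not carry the exponent `p`.
  suffices H : ∃ CZ CX : ℝ, 1 ≤ CZ ∧ 1 ≤ CX ∧ ∀ n : ℕ,
      (∫ x, |(G x - ∑ i, αn n i * x i) - ∫ y, (G y - ∑ i, αn n i * y i)
          ∂(Measure.pi fun _ : Fin k => ν n)| ^ p ∂(Measure.pi fun _ : Fin k => ν n))
        ≤ CZ * τ ^ (2 * p * n) ∧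
      (∫ x, |x - HierSeq.mean ν n| ^ p ∂ν n) ≤ CX * τ ^ (p * n) by
    obtain ⟨CZ, CX, hCZ, hCX, H⟩ := H
    refine ⟨CZ, CX, fun n => ⟨?_, (H n).2.trans ?_⟩⟩
    · have hZG : Z n =ᵐ[Measure.pi fun _ : Fin k => ν n] fun x => G x - ∑ i, αn n i * x i := by
        filter_upwards [h.ae_box n] with x hx
        rw [hZ n, hGF x hx]
      rw [integral_congr_ae hZG]
      refine (integral_congr_ae ?_).trans_le ((H n).1.trans ?_)
      · filter_upwards [hZG] with x hx
        rw [hx]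
      · exact mul_le_mul_of_nonneg_right (Real.self_le_rpow_of_one_le hCZ hp)
          (Real.rpow_nonneg hτ0.le _)
    · exact mul_le_mul_of_nonneg_right (Real.self_le_rpow_of_one_le hCX hp)
        (Real.rpow_nonneg hτ0.le _)
  rcases le_or_gt 1 τ with h1 | h1
  · obtain ⟨CZ, CX, hCZ, hCX, H⟩ := h.trivial_bounds hp hM hTG
    refine ⟨CZ, CX, hCZ, hCX, fun n => ⟨(H n).1.trans ?_, (H n).2.trans ?_⟩⟩
    · exact le_mul_of_one_le_right (by linarith) (Real.one_le_rpow h1 (by positivity))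
    · exact le_mul_of_one_le_right (by linarith) (Real.one_le_rpow h1 (by positivity))
  set α : Fin k → ℝ := fun i => fderivWithin ℝ F (Set.Icc (fun _ : Fin k => a) (fun _ => b))
    (fun _ => c) (Pi.single i 1) with hα
  have hsum : ∑ i, α i ^ 2 = lam ^ 2 := by
    rw [hlam, Real.sq_sqrt (Finset.sum_nonneg fun i _ => sq_nonneg _)]
  have hlt : ∑ i, α i ^ 2 < τ ^ 2 := by
    rw [hsum]
    nlinarith
  have hN := nearLinear_of_hypotheses hab hk hmaps hF havg hGF h hprob hα (by nlinarith)
  obtain ⟨CZ, CX, hCZ, hCX, H⟩ := h.moment_bounds (by omega) hN hτ0 h1.le hlt hM hTG hp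
  refine ⟨CZ, CX, hCZ, hCX, fun n => ?_⟩
  have e1 : (τ ^ (2 * n)) ^ p = τ ^ (2 * p * n) := by
    rw [← Real.rpow_natCast, ← Real.rpow_mul hτ0.le]
    congr 1
    push_cast
    ring
  have e2 : (τ ^ n) ^ p = τ ^ (p * n) := by
    rw [← Real.rpow_natCast, ← Real.rpow_mul hτ0.le, mul_comm]
  rw [← e1, ← e2]
  exact H n
end

section
/- Let w_1, w_2, w_3, w_4 > 0 and define the diamond lattice conductivity function F : (0,∞)^4 → (0,∞) by F(x_1,x_2,x_3,x_4) = (1/(w_1 x_1) + 1/(w_2 x_2))^{-1} + (1/(w_3 x_3) + 1/(w_4 x_4))^{-1}. Then F is a scaled strictly averaging function on (0,∞)^4, i.e., F(x)/F(1,1,1,1) is strictly averaging. -/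
/-!
The diamond function is a sum of two series conductances `(a⁻¹ + b⁻¹)⁻¹`, each strictly
increasing in both positive arguments, so it is strictly increasing in every conductivity
(`diamondF_le`, `diamondF_lt`). It is also homogeneous of degree one: on the constant vector `c`
it equals `c` times its value at the all-ones vector (`diamondF_const`). Comparing `x` with the
constant vectors at its smallest and largest coordinates therefore gives the averaging bounds,
and strict monotonicity makes both strict as soon as `x` is not constant.
-/

/-- A function `F : D^k → D` is strictly averaging if (1) `min_i x_i ≤ F x ≤ max_i x_i`,
with both inequalities strict whenever `min_i x_i < max_i x_i`, and (2) `F` is monotone,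
strictly so when some coordinate strictly increases. -/
def StrictlyAveraging (D : Set ℝ) (k : ℕ) (F : (Fin k → ℝ) → ℝ) : Prop :=
  (∀ x : Fin k → ℝ, (∀ i, x i ∈ D) →
      (∃ i, x i ≤ F x) ∧ (∃ i, F x ≤ x i) ∧
      ((∃ i j, x i < x j) → (∃ i, x i < F x) ∧ (∃ i, F x < x i))) ∧
  (∀ x y : Fin k → ℝ, (∀ i, x i ∈ D) → (∀ i, y i ∈ D) → (∀ i, x i ≤ y i) →
      F x ≤ F y ∧ ((∃ j, x j < y j) → F x < F y))

/-- The diamond lattice conductivity function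
`F(x) = (1/(w₁x₁) + 1/(w₂x₂))⁻¹ + (1/(w₃x₃) + 1/(w₄x₄))⁻¹`. -/
noncomputable def diamondF (w : Fin 4 → ℝ) (x : Fin 4 → ℝ) : ℝ :=
  ((w 0 * x 0)⁻¹ + (w 1 * x 1)⁻¹)⁻¹ + ((w 2 * x 2)⁻¹ + (w 3 * x 3)⁻¹)⁻¹

theorem series_le {a b c d : ℝ} (ha : 0 < a) (hb : 0 < b) (hac : a ≤ c) (hbd : b ≤ d) :
    (a⁻¹ + b⁻¹)⁻¹ ≤ (c⁻¹ + d⁻¹)⁻¹ := by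
  have hc := ha.trans_le hac
  have hd := hb.trans_le hbd
  gcongr

theorem series_lt {a b c d : ℝ} (ha : 0 < a) (hb : 0 < b) (hac : a ≤ c) (hbd : b ≤ d)
    (h : a < c ∨ b < d) : (a⁻¹ + b⁻¹)⁻¹ < (c⁻¹ + d⁻¹)⁻¹ := by
  have hc := ha.trans_le hac
  have hd := hb.trans_le hbd
  have h1 : c⁻¹ ≤ a⁻¹ := inv_anti₀ ha hac
  have h2 : d⁻¹ ≤ b⁻¹ := inv_anti₀ hb hbd
  apply inv_strictAnti₀ (by positivity)
  rcases h with h | h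
  · exact add_lt_add_of_lt_of_le (inv_strictAnti₀ ha h) h2
  · exact add_lt_add_of_le_of_lt h1 (inv_strictAnti₀ hb h)

theorem diamondF_le {w x y : Fin 4 → ℝ} (hw : ∀ i, 0 < w i) (hx : ∀ i, 0 < x i)
    (hxy : ∀ i, x i ≤ y i) : diamondF w x ≤ diamondF w y := by
  have hp : ∀ i, 0 < w i * x i := fun i => mul_pos (hw i) (hx i)
  have hle : ∀ i, w i * x i ≤ w i * y i := fun i => mul_le_mul_of_nonneg_left (hxy i) (hw i).le
  exact add_le_add (series_le (hp 0) (hp 1) (hle 0) (hle 1))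
    (series_le (hp 2) (hp 3) (hle 2) (hle 3))

theorem diamondF_lt {w x y : Fin 4 → ℝ} (hw : ∀ i, 0 < w i) (hx : ∀ i, 0 < x i)
    (hxy : ∀ i, x i ≤ y i) (h : ∃ j, x j < y j) : diamondF w x < diamondF w y := by
  have hp : ∀ i, 0 < w i * x i := fun i => mul_pos (hw i) (hx i)
  have hle : ∀ i, w i * x i ≤ w i * y i := fun i => mul_le_mul_of_nonneg_left (hxy i) (hw i).le
  obtain ⟨j, hj⟩ := h
  have hlt : w j * x j < w j * y j := mul_lt_mul_of_pos_left hj (hw j)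
  have hA := series_le (hp 0) (hp 1) (hle 0) (hle 1)
  have hB := series_le (hp 2) (hp 3) (hle 2) (hle 3)
  have hA' := series_lt (hp 0) (hp 1) (hle 0) (hle 1)
  have hB' := series_lt (hp 2) (hp 3) (hle 2) (hle 3)
  fin_cases j
  · exact add_lt_add_of_lt_of_le (hA' (Or.inl hlt)) hB
  · exact add_lt_add_of_lt_of_le (hA' (Or.inr hlt)) hB
  · exact add_lt_add_of_le_of_lt hA (hB' (Or.inl hlt))
  · exact add_lt_add_of_le_of_lt hA (hB' (Or.inr hlt))

theorem diamondF_one_pos {w : Fin 4 → ℝ} (hw : ∀ i, 0 < w i) :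
    0 < diamondF w (fun _ => 1) := by
  have h0 := hw 0
  have h1 := hw 1
  have h2 := hw 2
  have h3 := hw 3
  unfold diamondF
  positivity

/-- Homogeneity of degree one along the diagonal; at `c = 0` both sides are `0`. -/
theorem diamondF_const (w : Fin 4 → ℝ) (c : ℝ) :
    diamondF w (fun _ => c) = c * diamondF w (fun _ => 1) := by
  simp only [diamondF, mul_inv, mul_one, ← add_mul, inv_inv]
  ring

/-- for any positive weights, the diamond lattice conductivity function
is scaled strictly averaging on `(0,∞)⁴`, i.e. `F(x)/F(1,1,1,1)` is strictly
averaging. -/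
theorem diamondF_scaled_strictlyAveraging
    (w : Fin 4 → ℝ) (hw : ∀ i, 0 < w i) :
    StrictlyAveraging (Set.Ioi (0 : ℝ)) 4
      (fun x => diamondF w x / diamondF w (fun _ => 1)) := by
  have hF := diamondF_one_pos hw
  refine ⟨fun x hx => ?_, fun x y hx _ hxy => ?_⟩
  · obtain ⟨m, hm⟩ := Finite.exists_min x
    obtain ⟨M, hM⟩ := Finite.exists_max x
    simp only [le_div_iff₀ hF, div_le_iff₀ hF, lt_div_iff₀ hF, div_lt_iff₀ hF, ← diamondF_const]
    refine ⟨⟨m, diamondF_le hw (fun _ => hx m) hm⟩, ⟨M, diamondF_le hw hx hM⟩, ?_⟩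
    rintro ⟨i, j, hij⟩
    exact ⟨⟨m, diamondF_lt hw (fun _ => hx m) hm ⟨j, (hm i).trans_lt hij⟩⟩,
      ⟨M, diamondF_lt hw hx hM ⟨i, hij.trans_le (hM j)⟩⟩⟩
  · exact ⟨div_le_div_of_nonneg_right (diamondF_le hw hx hxy) hF.le,
      fun h => div_lt_div_of_pos_right (diamondF_lt hw hx hxy h) hF⟩
end
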